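/- Let n ≥ 2 and let A, B ⊆ ℝⁿ be Borel sets with dimH A > n−1 and dimH B > n−1. Then the set of unit vectors e ∈ S^{n−1} for which the intersection P_e(A) ∩ P_e(B) has positive (n−1)-dimensional Hausdorff measure has positive (n−1)-dimensional Hausdorff measure in S^{n−1}. -/

import Mathlib

open MeasureTheory Metric Set
open scoped ENNReal RealInnerProductSpace

/-- The weighted quadratic form `∑ w i * g i ^ 2` on extended nonnegative functions. -/
noncomputable def weightedSq {ι : Type*} (w g : ι → ℝ≥0∞) : ℝ≥0∞ := ∑' i, w i * g i ^ 2

theorem weightedSq_const_mul {ι : Type*} (w g : ι → ℝ≥0∞) (c : ℝ≥0∞) :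
    weightedSq w (fun i => c * g i) = c ^ 2 * weightedSq w g := by
  unfold weightedSq
  rw [← ENNReal.tsum_mul_left]
  congr 1; ext i; ring

theorem ENNReal.parallelogram_le (a b : ℝ≥0∞) :
    (a + b) ^ 2 + ((a - b) + (b - a)) ^ 2 ≤ 2 * a ^ 2 + 2 * b ^ 2 := by
  induction a with
  | top => simp
  | coe a =>
    induction b with
    | top => simp
    | coe b =>
      norm_cast
      rcases le_total a b with h | h
      · obtain ⟨c, rfl⟩ := exists_add_of_le h
        simp only [tsub_eq_zero_of_le h, add_tsub_cancel_left, zero_add]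
        apply le_of_eq; ring
      · obtain ⟨c, rfl⟩ := exists_add_of_le h
        simp only [tsub_eq_zero_of_le h, add_tsub_cancel_left, add_zero]
        apply le_of_eq; ring

theorem ENNReal.add_sq_le_two_mul (a b : ℝ≥0∞) : (a + b) ^ 2 ≤ 2 * a ^ 2 + 2 * b ^ 2 :=
  le_self_add.trans (ENNReal.parallelogram_le a b)

theorem ENNReal.add_sq_le_weighted (a b : ℝ≥0∞) {t : ℝ≥0∞} (h0 : t ≠ 0) (ht : t ≠ ∞) :
    (a + b) ^ 2 ≤ (1 + t) * a ^ 2 + (1 + t⁻¹) * b ^ 2 := by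
  lift t to NNReal using ht
  have ht0 : t ≠ 0 := by simpa using h0
  induction a with
  | top => simp
  | coe a =>
    induction b with
    | top => simp
    | coe b =>
      rw [← ENNReal.coe_inv ht0]
      norm_cast
      rw [← NNReal.coe_le_coe]
      push_cast
      have htp : (0 : ℝ) < t := by positivity
      have h : ((1 + (t:ℝ)) * a ^ 2 + (1 + (t:ℝ)⁻¹) * b ^ 2) - (a + b) ^ 2
          = (t * a - b) ^ 2 / t := by field_simp; ring
      have : 0 ≤ ((t:ℝ) * a - b) ^ 2 / t := by positivity
      linarith

theorem ENNReal.sum_range_sq_le (N : ℕ) (d : ℕ → ℝ≥0∞) :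
    (∑ i ∈ Finset.range N, d i) ^ 2 ≤ ∑ i ∈ Finset.range N, 2 ^ (i + 1) * d i ^ 2 := by
  induction N generalizing d with
  | zero => simp
  | succ N ih =>
    rw [Finset.sum_range_succ', Finset.sum_range_succ']
    refine (ENNReal.add_sq_le_two_mul _ _).trans ?_
    refine add_le_add ((mul_le_mul_right (ih fun i => d (i + 1)) 2).trans (le_of_eq ?_)) (by simp)
    rw [Finset.mul_sum]
    refine Finset.sum_congr rfl fun i _ => by ring

theorem ENNReal.tsum_sq_le (d : ℕ → ℝ≥0∞) :
    (∑' i, d i) ^ 2 ≤ ∑' i, 2 ^ (i + 1) * d i ^ 2 := by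
  have h := ((ENNReal.continuous_pow 2).tendsto _).comp (ENNReal.tendsto_nat_tsum d)
  exact le_of_tendsto h (Filter.Eventually.of_forall fun N =>
    (ENNReal.sum_range_sq_le N d).trans (ENNReal.sum_le_tsum _))

/-- For a decreasing sequence of convex upper sets, the infimum of a weighted quadratic form over
the intersection is the limit of the infima. -/
theorem iInf_weightedSq_iInter_le {ι : Type*} (w : ι → ℝ≥0∞) (Ω : ℕ → Set (ι → ℝ≥0∞))
    (hanti : Antitone Ω) (hup : ∀ k, IsUpperSet (Ω k))
    (hmid : ∀ k, ∀ g ∈ Ω k, ∀ h ∈ Ω k, (fun i => 2⁻¹ * (g i + h i)) ∈ Ω k)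
    {m : ℝ≥0∞} (hm : ∀ k, ⨅ g ∈ Ω k, weightedSq w g ≤ m) :
    ⨅ g ∈ ⋂ k, Ω k, weightedSq w g ≤ m := by
  rcases eq_or_ne m ∞ with rfl | hmtop
  · exact le_top
  set q : ℕ → ℝ≥0∞ := fun k => ⨅ g ∈ Ω k, weightedSq w g with hq
  have hqmono : Monotone q := fun i j hij => biInf_mono (hanti hij)
  set Q : ℝ≥0∞ := ⨆ k, q k with hQ
  have hQm : Q ≤ m := iSup_le hm
  have hQtop : Q ≠ ∞ := ne_top_of_le_ne_top hmtop hQm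
  refine le_trans ?_ hQm
  set e : ℕ → ℝ≥0∞ := fun k => (16⁻¹) ^ k with he
  have he0 : ∀ k, e k ≠ 0 := fun k => pow_ne_zero _ (by simp)
  have hetop : ∀ k, e k ≠ ∞ := fun k => ENNReal.pow_ne_top (by simp)
  have hex : ∀ k, ∃ N, Q ≤ q N + e k := by
    intro k
    by_contra! hcon
    rcases eq_or_ne Q 0 with h0 | h0
    · simpa [h0] using hcon 0
    · have hlt : Q - e k < Q := ENNReal.sub_lt_self hQtop h0 (he0 k)
      obtain ⟨N, hN⟩ := lt_iSup_iff.1 hlt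
      have h1 := hcon N
      exact absurd (tsub_le_iff_right.1 hN.le) (not_le.2 h1)
  choose N hN using hex
  obtain ⟨φ, hφmono, hφ⟩ : ∃ φ : ℕ → ℕ, StrictMono φ ∧ ∀ k, Q ≤ q (φ k) + e k := by
    refine ⟨fun k => k + ∑ i ∈ Finset.range (k + 1), N i, ?_, ?_⟩
    · refine strictMono_nat_of_lt_succ fun k => ?_
      simp only [Finset.sum_range_succ]; omega
    · intro k
      refine (hN k).trans ?_
      gcongr
      apply hqmono
      simp only [Finset.sum_range_succ]; omega
  have hchoose : ∀ k, ∃ g ∈ Ω (φ k), weightedSq w g ≤ Q + e k := by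
    intro k
    have h1 : q (φ k) < Q + e k :=
      lt_of_le_of_lt (le_iSup q _) (ENNReal.lt_add_right hQtop (he0 k))
    simp only [hq, iInf_lt_iff] at h1
    obtain ⟨g, hg, h⟩ := h1
    exact ⟨g, hg, h.le⟩
  choose g hgΩ hgQ using hchoose
  set d : ℕ → ι → ℝ≥0∞ := fun k i => (g k i - g (k + 1) i) + (g (k + 1) i - g k i) with hd
  have hdQ : ∀ k, weightedSq w (d k) ≤ 8 * e k := by
    intro k
    have hmidk : q (φ k) ≤ weightedSq w (fun i => 2⁻¹ * (g k i + g (k + 1) i)) :=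
      iInf₂_le _ (hmid _ _ (hgΩ k) _ (hanti (hφmono.monotone (Nat.le_succ k)) (hgΩ (k + 1))))
    rw [weightedSq_const_mul w (fun i => g k i + g (k + 1) i)] at hmidk
    have hpar : weightedSq w (fun i => g k i + g (k + 1) i) + weightedSq w (d k)
        ≤ 2 * weightedSq w (g k) + 2 * weightedSq w (g (k + 1)) := by
      unfold weightedSq
      rw [← ENNReal.tsum_mul_left, ← ENNReal.tsum_mul_left, ← ENNReal.tsum_add,
        ← ENNReal.tsum_add]
      refine ENNReal.tsum_le_tsum fun i => ?_
      calc w i * (g k i + g (k + 1) i) ^ 2 + w i * d k i ^ 2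
          = w i * ((g k i + g (k + 1) i) ^ 2 + d k i ^ 2) := by ring
        _ ≤ w i * (2 * g k i ^ 2 + 2 * g (k + 1) i ^ 2) := by
            exact mul_le_mul_right (ENNReal.parallelogram_le _ _) _
        _ = _ := by ring
    have hqk : 4 * q (φ k) ≤ weightedSq w (fun i => g k i + g (k + 1) i) := by
      calc 4 * q (φ k) ≤ 4 * (2⁻¹ ^ 2 * weightedSq w (fun i => g k i + g (k + 1) i)) := by gcongr
        _ = ((2 * 2⁻¹) * (2 * 2⁻¹)) * weightedSq w (fun i => g k i + g (k + 1) i) := by ring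
        _ = _ := by rw [ENNReal.mul_inv_cancel (by simp) (by simp)]; simp
    have hee : e (k + 1) ≤ e k := by
      simp only [he, pow_succ]
      calc (16⁻¹ : ℝ≥0∞) ^ k * 16⁻¹ ≤ 16⁻¹ ^ k * 1 := by gcongr; simp
        _ = _ := mul_one _
    have hqfin : 4 * q (φ k) ≠ ∞ :=
      ENNReal.mul_ne_top (by simp) (ne_top_of_le_ne_top hQtop (le_iSup q _))
    have : 4 * q (φ k) + weightedSq w (d k) ≤ 4 * q (φ k) + 8 * e k := by
      calc 4 * q (φ k) + weightedSq w (d k)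
          ≤ 2 * weightedSq w (g k) + 2 * weightedSq w (g (k + 1)) := le_trans (by gcongr) hpar
        _ ≤ 2 * (Q + e k) + 2 * (Q + e k) := by
            gcongr
            · exact hgQ k
            · exact (hgQ (k + 1)).trans (by gcongr)
        _ = 4 * Q + 4 * e k := by ring
        _ ≤ 4 * (q (φ k) + e k) + 4 * e k := by gcongr; exact hφ k
        _ = _ := by ring
    exact (ENNReal.add_le_add_iff_left hqfin).1 this
  set h : ℕ → ι → ℝ≥0∞ := fun K i => g K i + ∑' j, d (K + j) i with hh
  have hgh : ∀ K j, g (K + j) ≤ h K := by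
    intro K j i
    have : g (K + j) i ≤ g K i + ∑ r ∈ Finset.range j, d (K + r) i := by
      induction j with
      | zero => simp
      | succ j ih =>
        rw [Finset.sum_range_succ]
        calc g (K + (j + 1)) i ≤ g (K + j) i + (g (K + j + 1) i - g (K + j) i) :=
              le_add_tsub
          _ ≤ (g K i + ∑ r ∈ Finset.range j, d (K + r) i) + d (K + j) i :=
              add_le_add ih le_add_self
          _ = _ := add_assoc _ _ _
    exact this.trans (by simp only [hh]; gcongr; exact ENNReal.sum_le_tsum _)
  have hhΩ : ∀ K, h K ∈ ⋂ k, Ω k := by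
    intro K
    refine mem_iInter.2 fun k => ?_
    refine hup k (hgh K k) (hanti ?_ (hgΩ (K + k)))
    exact (Nat.le_add_left k K).trans (hφmono.le_apply)
  have hS : ∀ K, weightedSq w (fun i => ∑' j, d (K + j) i) ≤ 32 * e K := by
    intro K
    calc weightedSq w (fun i => ∑' j, d (K + j) i)
        ≤ ∑' i, ∑' j, 2 ^ (j + 1) * (w i * d (K + j) i ^ 2) := by
          refine ENNReal.tsum_le_tsum fun i => ?_
          calc w i * (∑' j, d (K + j) i) ^ 2
              ≤ w i * ∑' j, 2 ^ (j + 1) * d (K + j) i ^ 2 := by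
                gcongr; exact ENNReal.tsum_sq_le fun j => d (K + j) i
            _ = _ := by rw [← ENNReal.tsum_mul_left]; congr 1; ext j; ring
      _ = ∑' j, 2 ^ (j + 1) * weightedSq w (d (K + j)) := by
          rw [ENNReal.tsum_comm]; congr 1; ext j; rw [ENNReal.tsum_mul_left]; rfl
      _ ≤ ∑' j, 16 * e K * (2⁻¹ : ℝ≥0∞) ^ j := by
          refine ENNReal.tsum_le_tsum fun j => ?_
          calc (2 : ℝ≥0∞) ^ (j + 1) * weightedSq w (d (K + j)) ≤ 2 ^ (j + 1) * (8 * e (K + j)) := by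
                gcongr; exact hdQ _
            _ = 16 * e K * (2 * 16⁻¹) ^ j := by simp only [he, pow_add, mul_pow]; ring
            _ ≤ _ := by
                gcongr
                rw [ENNReal.le_inv_iff_mul_le]
                calc (2 : ℝ≥0∞) * 16⁻¹ * 2 ≤ 16 * 16⁻¹ := by
                      rw [mul_right_comm]; gcongr; norm_num
                  _ ≤ 1 := ENNReal.mul_inv_le_one _
      _ = 32 * e K := by
          rw [ENNReal.tsum_mul_left, ENNReal.tsum_geometric, ENNReal.one_sub_inv_two, inv_inv]
          ring
  have hbound : ∀ K : ℕ, ⨅ g ∈ ⋂ k, Ω k, weightedSq w g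
      ≤ (1 + 4⁻¹ ^ K) * (Q + e K) + (e K + 4⁻¹ ^ K) * 32 := by
    intro K
    refine (iInf₂_le _ (hhΩ K)).trans ?_
    have h4 : ((4 : ℝ≥0∞)⁻¹ ^ K) ≠ 0 := pow_ne_zero _ (by simp)
    have h4t : ((4 : ℝ≥0∞)⁻¹ ^ K) ≠ ∞ := ENNReal.pow_ne_top (by simp)
    have heK : e K = (4⁻¹ : ℝ≥0∞) ^ K * 4⁻¹ ^ K := by
      simp only [he]
      rw [← mul_pow, ← ENNReal.mul_inv (by simp) (by simp)]; norm_num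
    calc weightedSq w (h K)
        ≤ (1 + 4⁻¹ ^ K) * weightedSq w (g K)
          + (1 + (4⁻¹ ^ K)⁻¹) * weightedSq w (fun i => ∑' j, d (K + j) i) := by
          unfold weightedSq
          rw [← ENNReal.tsum_mul_left, ← ENNReal.tsum_mul_left, ← ENNReal.tsum_add]
          refine ENNReal.tsum_le_tsum fun i => ?_
          refine (mul_le_mul_right (ENNReal.add_sq_le_weighted (g K i) (∑' j, d (K + j) i)
            h4 h4t) (w i)).trans (le_of_eq ?_)
          ring
      _ ≤ (1 + 4⁻¹ ^ K) * (Q + e K) + (1 + (4⁻¹ ^ K)⁻¹) * (32 * e K) := by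
          gcongr
          · exact hgQ K
          · exact hS K
      _ = (1 + 4⁻¹ ^ K) * (Q + e K) + (e K + (4⁻¹ ^ K)⁻¹ * (4⁻¹ ^ K) * 4⁻¹ ^ K) * 32 := by
          congr 1; rw [heK]; ring
      _ = _ := by rw [ENNReal.inv_mul_cancel h4 h4t, one_mul]
  have hlim4 : Filter.Tendsto (fun K : ℕ => (4⁻¹ : ℝ≥0∞) ^ K) Filter.atTop (nhds 0) :=
    ENNReal.tendsto_pow_atTop_nhds_zero_of_lt_one (by norm_num)
  have hlime : Filter.Tendsto e Filter.atTop (nhds 0) :=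
    ENNReal.tendsto_pow_atTop_nhds_zero_of_lt_one (by norm_num)
  have hlim : Filter.Tendsto (fun K : ℕ => (1 + 4⁻¹ ^ K) * (Q + e K) + (e K + 4⁻¹ ^ K) * 32)
      Filter.atTop (nhds ((1 + 0) * (Q + 0) + (0 + 0) * 32)) := by
    refine Filter.Tendsto.add ?_ ?_
    · exact ENNReal.Tendsto.mul (hlim4.const_add 1) (Or.inl (by simp)) (hlime.const_add Q)
        (Or.inr (by simp))
    · exact ENNReal.Tendsto.mul_const (hlime.add hlim4) (Or.inr (by simp))
  have := ge_of_tendsto' hlim hbound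
  simpa using this

/-- Functions on the nodes of the tree of finite words whose sum along every branch in `E` is at
least one. -/
def treeAdmissible {D : Type*} (E : Set (ℕ → D)) : Set (List D → ℝ≥0∞) :=
  {g | ∀ x ∈ E, 1 ≤ ∑' k, g (PiNat.res x k)}

/-- The quadratic capacity of a set of branches, a node of height `k` having weight `a ^ k`. -/
noncomputable def treeCap {D : Type*} (a : ℝ≥0∞) (E : Set (ℕ → D)) : ℝ≥0∞ :=
  ⨅ g ∈ treeAdmissible E, weightedSq (fun l : List D => a ^ l.length) g

section TreeCap

variable {D : Type*} (a : ℝ≥0∞)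

theorem treeAdmissible_anti {E F : Set (ℕ → D)} (h : E ⊆ F) :
    treeAdmissible F ⊆ treeAdmissible E :=
  fun _ hg x hx => hg x (h hx)

theorem treeCap_mono {E F : Set (ℕ → D)} (h : E ⊆ F) : treeCap a E ≤ treeCap a F :=
  biInf_mono (treeAdmissible_anti h)

theorem treeCap_empty : treeCap a (∅ : Set (ℕ → D)) = 0 := by
  refine le_antisymm ((iInf₂_le (fun _ => 0) ?_).trans ?_) bot_le
  · intro x hx; exact hx.elim
  · simp [weightedSq]

theorem treeCap_union_le (E F : Set (ℕ → D)) :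
    treeCap a (E ∪ F) ≤ treeCap a E + treeCap a F := by
  unfold treeCap
  simp only [ENNReal.iInf_add, ENNReal.add_iInf]
  refine le_iInf₂ fun g hg => le_iInf₂ fun h hh => (iInf₂_le (g ⊔ h) ?_).trans ?_
  · rintro x (hx | hx)
    · exact (hh x hx).trans (ENNReal.tsum_le_tsum fun k => le_sup_right)
    · exact (hg x hx).trans (ENNReal.tsum_le_tsum fun k => le_sup_left)
  · unfold weightedSq
    rw [← ENNReal.tsum_add]
    refine ENNReal.tsum_le_tsum fun l => ?_
    rw [← mul_add]
    refine mul_le_mul_right ?_ _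
    simp only [Pi.sup_apply]
    rcases le_total (g l) (h l) with h1 | h1
    · rw [sup_eq_right.2 h1]; exact le_self_add
    · rw [sup_eq_left.2 h1]; exact le_add_self

theorem treeCap_biUnion_le {ι : Type*} (s : Finset ι) (E : ι → Set (ℕ → D)) :
    treeCap a (⋃ i ∈ s, E i) ≤ ∑ i ∈ s, treeCap a (E i) := by
  classical
  induction s using Finset.induction_on with
  | empty => simp [treeCap_empty]
  | insert i s hi ih =>
    rw [Finset.set_biUnion_insert, Finset.sum_insert hi]
    exact (treeCap_union_le a _ _).trans (by gcongr)

theorem treeCap_cylinder_le (x : ℕ → D) (k : ℕ) : treeCap a (PiNat.cylinder x k) ≤ a ^ k := by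
  classical
  refine (iInf₂_le (fun l => if l = PiNat.res x k then 1 else 0) ?_).trans ?_
  · intro y hy
    rw [PiNat.cylinder_eq_res] at hy
    refine le_trans ?_ (ENNReal.le_tsum k)
    have hy' : PiNat.res y k = PiNat.res x k := hy
    simp [hy']
  · unfold weightedSq
    rw [tsum_eq_single (PiNat.res x k)]
    · simp
    · intro l hl; simp [hl]

theorem treeCap_iUnion_le {E : ℕ → Set (ℕ → D)} (hE : Monotone E) {m : ℝ≥0∞}
    (hm : ∀ k, treeCap a (E k) ≤ m) : treeCap a (⋃ k, E k) ≤ m := by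
  have h := iInf_weightedSq_iInter_le (fun l : List D => a ^ l.length)
    (fun k => treeAdmissible (E k)) (fun i j hij => treeAdmissible_anti (hE hij))
    (fun k g h hgh hg x hx => (hg x hx).trans (ENNReal.tsum_le_tsum fun j => hgh _))
    (fun k g hg h hh x hx => ?_) hm
  · refine le_trans (le_of_eq ?_) h
    unfold treeCap
    have hadm : treeAdmissible (⋃ k, E k) = ⋂ k, treeAdmissible (E k) := by
      ext g
      simp only [treeAdmissible, mem_ofPred_eq, mem_iUnion, mem_iInter]
      exact ⟨fun hg k x hx => hg x ⟨k, hx⟩, fun hg x ⟨k, hx⟩ => hg k x hx⟩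
    rw [hadm]
  · rw [ENNReal.tsum_mul_left, ENNReal.tsum_add]
    calc (1 : ℝ≥0∞) = 2⁻¹ * (1 + 1) := by
          rw [one_add_one_eq_two, ENNReal.inv_mul_cancel (by simp) (by simp)]
      _ ≤ _ := by gcongr; exacts [hg x hx, hh x hx]

variable [TopologicalSpace D] [DiscreteTopology D]

theorem continuous_comp_res {α : Type*} [TopologicalSpace α] (g : List D → α) (k : ℕ) :
    Continuous fun x : ℕ → D => g (PiNat.res x k) := by
  refine IsLocallyConstant.continuous ?_
  rw [IsLocallyConstant.iff_exists_open]
  intro x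
  refine ⟨PiNat.cylinder x k, PiNat.isOpen_cylinder _ x k, PiNat.self_mem_cylinder x k, ?_⟩
  intro y hy
  rw [PiNat.cylinder_eq_res] at hy
  rw [show PiNat.res y k = PiNat.res x k from hy]

theorem exists_isOpen_treeCap_lt {E : Set (ℕ → D)} {c : ℝ≥0∞} (h : treeCap a E < c) :
    ∃ U, IsOpen U ∧ E ⊆ U ∧ treeCap a U < c := by
  simp only [treeCap, iInf_lt_iff] at h
  obtain ⟨g, hg, hgc⟩ := h
  set w : List D → ℝ≥0∞ := fun l => a ^ l.length
  have hlim : Filter.Tendsto (fun t : ℝ≥0∞ => t ^ 2 * weightedSq w g) (nhds 1)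
      (nhds (1 ^ 2 * weightedSq w g)) :=
    ENNReal.Tendsto.mul_const ((ENNReal.continuous_pow 2).tendsto 1) (Or.inl (by simp))
  have hev := (hlim.eventually (gt_mem_nhds (by simpa using hgc))).filter_mono
    (nhdsWithin_le_nhds (s := Ioi 1))
  have : (nhdsWithin (1 : ℝ≥0∞) (Ioi 1)).NeBot := nhdsGT_neBot_of_exists_gt ⟨2, by norm_num⟩
  obtain ⟨t, ht, ht1⟩ := (hev.and self_mem_nhdsWithin).exists
  refine ⟨{x | 1 < ∑' k, t * g (PiNat.res x k)}, ?_, ?_, ?_⟩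
  · have hlsc : LowerSemicontinuous fun x : ℕ → D => ∑' k, t * g (PiNat.res x k) :=
      lowerSemicontinuous_tsum fun k =>
        (continuous_comp_res (fun l => t * g l) k).lowerSemicontinuous
    exact hlsc.isOpen_preimage 1
  · intro x hx
    simp only [mem_ofPred_eq, ENNReal.tsum_mul_left]
    calc (1 : ℝ≥0∞) < t := ht1
      _ = t * 1 := (mul_one t).symm
      _ ≤ _ := by gcongr; exact hg x hx
  · have hadm : (fun l => t * g l) ∈ treeAdmissible {x | 1 < ∑' k, t * g (PiNat.res x k)} :=
      fun x hx => le_of_lt (show 1 < ∑' k, t * g (PiNat.res x k) from hx)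
    refine lt_of_le_of_lt (iInf₂_le _ hadm) ?_
    rw [weightedSq_const_mul]
    exact ht

theorem isCompact_setOf_forall_le (b : ℕ → ℕ) : IsCompact {x : ℕ → ℕ | ∀ i, x i ≤ b i} := by
  have : {x : ℕ → ℕ | ∀ i, x i ≤ b i} = Set.pi univ fun i => Iic (b i) := by
    ext; simp [Pi.le_def]
  rw [this]
  exact isCompact_univ_pi fun i => (finite_Iic (b i)).isCompact

/-- An open set of integer sequences containing a box contains a box with only finitely many
constrained coordinates. -/
theorem exists_finite_box_subset (b : ℕ → ℕ) {U : Set (ℕ → ℕ)} (hU : IsOpen U)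
    (hb : {x : ℕ → ℕ | ∀ i, x i ≤ b i} ⊆ U) : ∃ k, {x : ℕ → ℕ | ∀ i < k, x i ≤ b i} ⊆ U := by
  by_contra! hcon
  have hcon' : ∀ k, ∃ x : ℕ → ℕ, (∀ i < k, x i ≤ b i) ∧ x ∉ U := by
    intro k
    obtain ⟨x, hx, hxU⟩ := not_subset.1 (hcon k)
    exact ⟨x, hx, hxU⟩
  choose x hx hxU using hcon'
  obtain ⟨y, hy, φ, hφ, hlim⟩ := (isCompact_setOf_forall_le b).tendsto_subseq
    (x := fun k i => min (x k i) (b i))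
    (fun k i => min_le_right _ _)
  have hlim' : Filter.Tendsto (x ∘ φ) Filter.atTop (nhds y) := by
    rw [tendsto_pi_nhds] at hlim ⊢
    intro i
    refine (hlim i).congr' ?_
    filter_upwards [Filter.eventually_gt_atTop i] with k hk
    exact min_eq_left (hx (φ k) i (hk.trans_le hφ.le_apply))
  obtain ⟨k, hk⟩ := (hlim'.eventually (hU.mem_nhds (hb hy))).exists
  exact hxU _ hk

/-- Analytic sets are inner regular for the tree capacity. -/
theorem exists_isCompact_le_treeCap {E : Set (ℕ → D)} (hE : AnalyticSet E) {c : ℝ≥0∞}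
    (h : c < treeCap a E) : ∃ K ⊆ E, IsCompact K ∧ c ≤ treeCap a K := by
  rw [AnalyticSet] at hE
  rcases hE with rfl | ⟨f, hf, rfl⟩
  · simp [treeCap_empty] at h
  have hstep : ∀ (k : ℕ) (b : ℕ → ℕ), c < treeCap a (f '' {x | ∀ i < k, x i ≤ b i}) →
      ∃ j, c < treeCap a (f '' {x | ∀ i < k + 1, x i ≤ Function.update b k j i}) := by
    intro k b hb
    by_contra! hcon
    refine absurd hb (not_lt.2 ?_)
    have hmono : Monotone fun j =>
        f '' {x | ∀ i < k + 1, x i ≤ Function.update b k j i} := by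
      intro j j' hjj
      refine image_mono fun x hx i hi => (hx i hi).trans ?_
      rcases eq_or_ne i k with rfl | hik
      · simpa using hjj
      · simp [hik]
    refine le_trans (treeCap_mono a ?_) (treeCap_iUnion_le a hmono hcon)
    rintro _ ⟨x, hx, rfl⟩
    refine mem_iUnion.2 ⟨x k, x, fun i hi => ?_, rfl⟩
    rcases eq_or_ne i k with rfl | hik
    · simp
    · simpa [hik] using hx i (by omega)
  choose! j hj using hstep
  let B : ℕ → ℕ → ℕ := fun k => Nat.rec (fun _ => 0) (fun k b => Function.update b k (j k b)) k
  have hBsucc : ∀ k, B (k + 1) = Function.update (B k) k (j k (B k)) := fun k => rfl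
  have hB : ∀ k, c < treeCap a (f '' {x | ∀ i < k, x i ≤ B k i}) := by
    intro k
    induction k with
    | zero => simpa using h
    | succ k ih => rw [hBsucc]; exact hj k _ ih
  have hBstable : ∀ i k, i < k → B k i = B (i + 1) i := by
    intro i k hik
    induction k, hik using Nat.le_induction with
    | base => rfl
    | succ k hk ih =>
      rw [hBsucc, Function.update_of_ne (by omega)]
      exact ih
  set b : ℕ → ℕ := fun i => B (i + 1) i with hb
  have hBb : ∀ k, c < treeCap a (f '' {x | ∀ i < k, x i ≤ b i}) := by
    intro k
    have hset : {x : ℕ → ℕ | ∀ i < k, x i ≤ b i} = {x | ∀ i < k, x i ≤ B k i} := by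
      ext x
      exact forall₂_congr fun i hi => by rw [hBstable i k hi]
    rw [hset]
    exact hB k
  refine ⟨f '' {x | ∀ i, x i ≤ b i}, image_subset_range _ _, ?_, ?_⟩
  · exact (isCompact_setOf_forall_le b).image hf
  · by_contra! hlt
    obtain ⟨U, hU, hsub, hUc⟩ := exists_isOpen_treeCap_lt a hlt
    obtain ⟨k, hk⟩ := exists_finite_box_subset b (hU.preimage hf) (image_subset_iff.1 hsub)
    exact absurd (hBb k) (not_lt.2 ((treeCap_mono a (image_subset_iff.2 hk)).trans hUc.le))

end TreeCap

/-- A set of branches of positive capacity, compact or merely closed, carries a probability measure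
whose mass on every cylinder is controlled by the weight of the cylinder. -/
theorem exists_measure_cylinder_le {D : Type*} [Fintype D] [TopologicalSpace D]
    [DiscreteTopology D] [MeasurableSpace D] [BorelSpace D] (a : ℝ≥0∞) {K : Set (ℕ → D)}
    (hK : IsClosed K) (hcap : treeCap a K ≠ 0) :
    ∃ (μ : Measure (ℕ → D)) (C : ℝ≥0∞), IsProbabilityMeasure μ ∧ C ≠ ∞ ∧ μ Kᶜ = 0 ∧
      ∀ x k, μ (PiNat.cylinder x k) ≤ C * a ^ k := by
  classical
  obtain ⟨d₀, hd₀⟩ : ∃ d : D, treeCap a (K ∩ {x | x 0 = d}) ≠ 0 := by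
    by_contra! hcon
    apply hcap
    refine le_antisymm ?_ bot_le
    calc treeCap a K ≤ treeCap a (⋃ d ∈ (Finset.univ : Finset D), K ∩ {x | x 0 = d}) := by
          refine treeCap_mono a fun x hx => ?_
          simp only [Finset.mem_univ, iUnion_true, mem_iUnion]
          exact ⟨x 0, hx, rfl⟩
      _ ≤ ∑ d, treeCap a (K ∩ {x | x 0 = d}) := treeCap_biUnion_le a _ _
      _ = 0 := by simp [hcon]
  set C : ℝ≥0∞ := (treeCap a (K ∩ {x | x 0 = d₀}))⁻¹ with hC
  have hcap_le_one : treeCap a (K ∩ {x | x 0 = d₀}) ≤ 1 := by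
    refine (treeCap_mono a (subset_univ _)).trans ?_
    rw [← PiNat.cylinder_zero fun _ => d₀]
    simpa using treeCap_cylinder_le a (fun _ => d₀) 0
  have hC1 : 1 ≤ C := ENNReal.one_le_inv.2 hcap_le_one
  let p : (k : ℕ) → (Finset.Iic k → D) → D → ℝ≥0∞ := fun k w d =>
    treeCap a (K ∩ {x | (∀ i : Finset.Iic k, x i = w i) ∧ x (k + 1) = d})
  let κ₀ : (k : ℕ) → (Finset.Iic k → D) → Measure D := fun k w =>
    if ∑ d, p k w d = 0 then Measure.dirac d₀
    else ∑ d, (p k w d / ∑ d, p k w d) • Measure.dirac d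
  have hpfin : ∀ k w d, p k w d ≠ ∞ := by
    intro k w d
    refine ne_top_of_le_ne_top ENNReal.one_ne_top ((treeCap_mono a (subset_univ _)).trans ?_)
    rw [← PiNat.cylinder_zero fun _ => d₀]
    simpa using treeCap_cylinder_le a (fun _ => d₀) 0
  have hκprob : ∀ k w, IsProbabilityMeasure (κ₀ k w) := by
    intro k w
    by_cases h : ∑ d, p k w d = 0
    · simp only [κ₀, if_pos h]; infer_instance
    · refine ⟨?_⟩
      simp only [κ₀, if_neg h, Measure.coe_finsetSum, Finset.sum_apply, Measure.smul_apply,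
        measure_univ, smul_eq_mul, mul_one]
      simp only [div_eq_mul_inv]
      rw [← Finset.sum_mul]
      exact ENNReal.mul_inv_cancel h (ENNReal.sum_ne_top.2 fun d _ => hpfin k w d)
  let κ : (k : ℕ) → ProbabilityTheory.Kernel (Finset.Iic k → D) D := fun k =>
    ProbabilityTheory.Kernel.ofFunOfCountable (κ₀ k)
  have hκM : ∀ k, ProbabilityTheory.IsMarkovKernel (κ k) := fun k => ⟨fun w => hκprob k w⟩
  let x₀ : Finset.Iic 0 → D := fun _ => d₀
  let μ : Measure (ℕ → D) := ProbabilityTheory.Kernel.traj (X := fun _ => D) κ 0 x₀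
  have hμprob : IsProbabilityMeasure μ := by infer_instance
  have hpre : ∀ (y : ℕ → D) (k : ℕ), PiNat.cylinder y (k + 1) =
      Preorder.frestrictLe (π := fun _ => D) k ⁻¹' {Preorder.frestrictLe k y} := by
    intro y k
    ext x
    simp only [PiNat.mem_cylinder_iff, mem_preimage, mem_singleton_iff, funext_iff,
      Preorder.frestrictLe_apply, Subtype.forall, Finset.mem_Iic, Nat.lt_succ_iff]
  have hcylp : ∀ (y : ℕ → D) (k : ℕ), p k (Preorder.frestrictLe k y) (y (k + 1)) =
      treeCap a (K ∩ PiNat.cylinder y (k + 2)) := by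
    intro y k
    simp only [p]
    congr 2
    ext x
    simp only [mem_ofPred_eq, PiNat.mem_cylinder_iff, Preorder.frestrictLe_apply, Subtype.forall,
      Finset.mem_Iic]
    constructor
    · rintro ⟨h1, h2⟩ i hi
      rcases Nat.lt_succ_iff_lt_or_eq.1 hi with h | rfl
      exacts [h1 i (by omega), h2]
    · exact fun h => ⟨fun i hi => h i (by omega), h _ (by omega)⟩
  have hsum : ∀ (y : ℕ → D) (k : ℕ), treeCap a (K ∩ PiNat.cylinder y (k + 1)) ≤
      ∑ d, p k (Preorder.frestrictLe k y) d := by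
    intro y k
    refine le_trans (treeCap_mono a ?_) (treeCap_biUnion_le a Finset.univ _)
    intro x hx
    simp only [Finset.mem_univ, iUnion_true, mem_iUnion]
    refine ⟨x (k + 1), hx.1, fun i => ?_, rfl⟩
    have := Finset.mem_Iic.1 i.2
    exact hx.2 i (by omega)
  have hstep : ∀ (y : ℕ → D) (k : ℕ), μ (PiNat.cylinder y (k + 2)) =
      μ (PiNat.cylinder y (k + 1)) * κ₀ k (Preorder.frestrictLe k y) {y (k + 1)} := by
    intro y k
    set w := Preorder.frestrictLe (π := fun _ => D) k y
    have hprod := ProbabilityTheory.Kernel.partialTraj_compProd_eq_map_traj (X := fun _ => D)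
      (κ := κ)
      (Nat.zero_le k) (x₀ := x₀)
    have happ := congrArg (fun m => m ({w} ×ˢ {y (k + 1)})) hprod
    rw [Measure.compProd_apply_prod (measurableSet_singleton _) (measurableSet_singleton _),
      Measure.map_apply (by fun_prop)
        ((measurableSet_singleton _).prod (measurableSet_singleton _)),
      lintegral_singleton, ← ProbabilityTheory.Kernel.traj_map_frestrictLe_apply,
      Measure.map_apply (by fun_prop) (measurableSet_singleton _), ← hpre y k] at happ
    have hset : PiNat.cylinder y (k + 2) = (fun x : ℕ → D => (Preorder.frestrictLe
        (π := fun _ => D) k x, x (k + 1))) ⁻¹' ({w} ×ˢ {y (k + 1)}) := by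
      ext x
      simp only [w, mem_preimage, mem_prod, mem_singleton_iff, PiNat.mem_cylinder_iff, funext_iff,
        Preorder.frestrictLe_apply, Subtype.forall, Finset.mem_Iic]
      constructor
      · exact fun h => ⟨fun i hi => h i (by omega), h _ (by omega)⟩
      · rintro ⟨h1, h2⟩ i hi
        rcases Nat.lt_succ_iff_lt_or_eq.1 hi with h | rfl
        exacts [h1 i (by omega), h2]
    rw [hset, mul_comm]
    exact happ.symm
  have hbound : ∀ (k : ℕ) (y : ℕ → D),
      μ (PiNat.cylinder y (k + 1)) ≤ C * treeCap a (K ∩ PiNat.cylinder y (k + 1)) := by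
    intro k
    induction k with
    | zero =>
      intro y
      by_cases hy : y 0 = d₀
      · have hset : PiNat.cylinder y (0 + 1) = {x | x 0 = d₀} := by
          ext x; simp [PiNat.mem_cylinder_iff, hy]
        rw [hset, hC, ENNReal.inv_mul_cancel hd₀ (ne_top_of_le_ne_top ENNReal.one_ne_top
          hcap_le_one)]
        exact prob_le_one
      · have hmap := DFunLike.congr_fun (ProbabilityTheory.Kernel.traj_map_frestrictLe_of_le
          (X := fun _ => D) (κ := κ) (le_refl 0)) x₀
        rw [ProbabilityTheory.Kernel.map_apply _ (by fun_prop),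
          ProbabilityTheory.Kernel.deterministic_apply] at hmap
        have h0 : μ (PiNat.cylinder y (0 + 1)) = 0 := by
          rw [hpre y 0, ← Measure.map_apply (by fun_prop) (measurableSet_singleton _), hmap,
            Measure.dirac_apply' _ (measurableSet_singleton _)]
          refine indicator_of_notMem ?_ _
          intro h
          have := congrFun h ⟨0, by simp⟩
          exact hy this.symm
        rw [h0]
        exact bot_le
    | succ k ih =>
      intro y
      rw [hstep y k]
      set w := Preorder.frestrictLe (π := fun _ => D) k y
      by_cases h : ∑ d, p k w d = 0
      · have h0 : treeCap a (K ∩ PiNat.cylinder y (k + 1)) = 0 :=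
          le_antisymm ((hsum y k).trans h.le) bot_le
        have : μ (PiNat.cylinder y (k + 1)) = 0 :=
          le_antisymm ((ih y).trans (by simp [h0])) bot_le
        simp [this]
      · have hval : κ₀ k w {y (k + 1)} = p k w (y (k + 1)) / ∑ d, p k w d := by
          simp only [κ₀, if_neg h, Measure.coe_finsetSum, Finset.sum_apply, Measure.smul_apply,
            smul_eq_mul]
          rw [Finset.sum_eq_single (y (k + 1))]
          · simp
          · intro b _ hb; simp [hb]
          · simp
        rw [hval, ← hcylp y k]
        calc μ (PiNat.cylinder y (k + 1)) * (p k w (y (k + 1)) / ∑ d, p k w d)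
            ≤ (C * ∑ d, p k w d) * (p k w (y (k + 1)) / ∑ d, p k w d) := by
              gcongr
              exact (ih y).trans (by gcongr; exact hsum y k)
          _ = C * p k w (y (k + 1)) * ((∑ d, p k w d) * (∑ d, p k w d)⁻¹) := by
              rw [div_eq_mul_inv]; ring
          _ ≤ C * p k w (y (k + 1)) * 1 := by gcongr; exact ENNReal.mul_inv_le_one _
          _ = _ := mul_one _
  refine ⟨μ, C, hμprob, ENNReal.inv_ne_top.2 hd₀, ?_, ?_⟩
  · refine measure_null_of_locally_null _ fun x hx => ?_
    obtain ⟨u, ⟨z, n, rfl⟩, hxu, hu⟩ :=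
      (PiNat.isTopologicalBasis_cylinders (fun _ => D)).exists_subset_of_mem_open hx hK.isOpen_compl
    have hx' : PiNat.cylinder x (n + 1) ⊆ Kᶜ :=
      (PiNat.cylinder_anti x (Nat.le_succ n)).trans
        ((PiNat.mem_cylinder_iff_eq.1 hxu).le.trans hu)
    refine ⟨PiNat.cylinder x (n + 1), mem_nhdsWithin_of_mem_nhds
      ((PiNat.isOpen_cylinder _ x _).mem_nhds (PiNat.self_mem_cylinder x _)), ?_⟩
    refine le_antisymm ((hbound n x).trans ?_) bot_le
    have : K ∩ PiNat.cylinder x (n + 1) = ∅ := by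
      rw [← disjoint_iff_inter_eq_empty]
      exact (subset_compl_iff_disjoint_left.1 hx')
    rw [this, treeCap_empty, mul_zero]
  · intro x k
    cases k with
    | zero => simpa using hC1
    | succ k =>
      refine (hbound k x).trans ?_
      gcongr
      exact (treeCap_mono a inter_subset_right).trans (treeCap_cylinder_le a x _)

/-- The binary coding of the unit cube with corner `m`. -/
noncomputable def cubeCode {n : ℕ} (m : Fin n → ℝ) (x : ℕ → Fin n → Fin 2) : Fin n → ℝ :=
  fun i => m i + Real.ofDigits fun j => x j i

section CubeCode

variable {n : ℕ} (m : Fin n → ℝ)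

theorem edist_cubeCode_le {x y : ℕ → Fin n → Fin 2} {k : ℕ} (h : PiNat.res x k = PiNat.res y k) :
    edist (cubeCode m x) (cubeCode m y) ≤ (2⁻¹ : ℝ≥0∞) ^ k := by
  refine edist_pi_le_iff.2 fun i => ?_
  rw [PiNat.res_eq_res] at h
  have h1 : |Real.ofDigits (fun j => x j i) - Real.ofDigits (fun j => y j i)| ≤
      ((2 : ℕ) ^ k : ℝ)⁻¹ :=
    Real.abs_ofDigits_sub_ofDigits_le fun j hj => by rw [h hj]
  simp only [cubeCode, edist_add_left]
  rw [edist_dist, Real.dist_eq]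
  refine (ENNReal.ofReal_le_ofReal h1).trans (le_of_eq ?_)
  rw [ENNReal.ofReal_inv_of_pos (by positivity), ENNReal.ofReal_pow (by positivity)]
  simp [ENNReal.inv_pow]

theorem continuous_cubeCode : Continuous (cubeCode m) := by
  rw [continuous_iff_continuousAt]
  intro x
  rw [ContinuousAt, EMetric.tendsto_nhds]
  intro ε hε
  obtain ⟨k, hk⟩ := ((ENNReal.tendsto_pow_atTop_nhds_zero_of_lt_one
    (show (2⁻¹ : ℝ≥0∞) < 1 by norm_num)).eventually (gt_mem_nhds hε)).exists
  filter_upwards [(PiNat.isOpen_cylinder _ x k).mem_nhds (PiNat.self_mem_cylinder x k)] with y hy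
  rw [PiNat.cylinder_eq_res] at hy
  exact (edist_cubeCode_le m hy).trans_lt hk

theorem exists_cubeCode_eq {y : Fin n → ℝ} (hy : ∀ i, y i - m i ∈ Ico (0 : ℝ) 1) :
    ∃ x, cubeCode m x = y := by
  refine ⟨fun j i => Real.digits (y i - m i) 2 j, funext fun i => ?_⟩
  simp only [cubeCode]
  rw [Real.ofDigits_digits one_lt_two (hy i)]
  ring

theorem hausdorffMeasure_cubeCode_image_eq_zero {s t : ℝ} (ht : 0 < t) (hts : t < s)
    {E : Set (ℕ → Fin n → Fin 2)} (hE : treeCap (2 ^ (-t) : ℝ≥0∞) E = 0) :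
    μH[s] (cubeCode m '' E) = 0 := by
  set a : ℝ≥0∞ := 2 ^ (-t) with ha
  set b : ℝ≥0∞ := 2 ^ (-s) with hb
  set r : ℝ≥0∞ := 2 ^ (-((s - t) / 2)) with hr
  have hab : b = a * r ^ 2 := by
    rw [ha, hb, hr, ← ENNReal.rpow_natCast, ← ENNReal.rpow_mul,
      ← ENNReal.rpow_add _ _ (by simp) (by simp)]
    congr 1; push_cast; ring
  have hr1 : r < 1 := ENNReal.rpow_lt_one_of_one_lt_of_neg (by norm_num) (by linarith)
  obtain ⟨c, hc0, hctop, hc⟩ : ∃ c : ℝ≥0∞, c ≠ 0 ∧ c ≠ ∞ ∧ ∑' k : ℕ, c * r ^ k < 1 := by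
    have h1 : 1 - r ≠ 0 := by simpa [tsub_eq_zero_iff_le] using hr1
    have h1t : 1 - r ≠ ∞ := by simp
    refine ⟨2⁻¹ * (1 - r), by simp [h1], ENNReal.mul_ne_top (by simp) h1t, ?_⟩
    rw [ENNReal.tsum_mul_left, ENNReal.tsum_geometric, mul_assoc,
      ENNReal.mul_inv_cancel h1 h1t]
    norm_num
  have hex : ∀ N : ℕ, ∃ g ∈ treeAdmissible E,
      weightedSq (fun l : List (Fin n → Fin 2) => a ^ l.length) g < ((N : ℝ≥0∞) + 1)⁻¹ := by
    intro N
    have : treeCap a E < ((N : ℝ≥0∞) + 1)⁻¹ := by rw [hE]; simp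
    simpa only [treeCap, iInf_lt_iff, exists_prop] using this
  choose g hg hgN using hex
  set δ : ℕ → ℝ≥0∞ := fun N => (c ^ 2)⁻¹ * ((N : ℝ≥0∞) + 1)⁻¹ with hδ
  have hδlim : Filter.Tendsto δ Filter.atTop (nhds 0) := by
    have h1 : Filter.Tendsto (fun N : ℕ => ((N : ℝ≥0∞) + 1)⁻¹) Filter.atTop (nhds 0) := by
      have := (Filter.tendsto_add_atTop_iff_nat 1).2 ENNReal.tendsto_inv_nat_nhds_zero
      simpa using this
    simpa using ENNReal.Tendsto.const_mul h1 (Or.inr (ENNReal.inv_ne_top.2 (by simp [hc0])))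
  let ι : ℕ → Type := fun N => {l : List (Fin n → Fin 2) // c * r ^ l.length ≤ g N l}
  let T : (N : ℕ) → ι N → Set (Fin n → ℝ) := fun N l =>
    cubeCode m '' {x | PiNat.res x l.1.length = l.1}
  have hdiam : ∀ N l, ediam (T N l) ≤ (2⁻¹ : ℝ≥0∞) ^ l.1.length := by
    intro N l
    refine ediam_le ?_
    rintro _ ⟨x, hx, rfl⟩ _ ⟨y, hy, rfl⟩
    have hx' : PiNat.res x l.1.length = l.1 := hx
    have hy' : PiNat.res y l.1.length = l.1 := hy
    exact edist_cubeCode_le m (hx'.trans hy'.symm)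
  have hdiams : ∀ N l, ediam (T N l) ^ s ≤ b ^ l.1.length := by
    intro N l
    refine (ENNReal.rpow_le_rpow (hdiam N l) (by linarith)).trans (le_of_eq ?_)
    rw [hb, ← ENNReal.rpow_natCast, ← ENNReal.rpow_natCast, ← ENNReal.rpow_mul,
      ENNReal.inv_rpow, ← ENNReal.rpow_neg, ← ENNReal.rpow_mul]
    congr 1; ring
  have hsum : ∀ N, ∑' l : ι N, b ^ l.1.length ≤ δ N := by
    intro N
    calc ∑' l : ι N, b ^ l.1.length
        ≤ ∑' l : ι N, (c ^ 2)⁻¹ * (a ^ l.1.length * g N l.1 ^ 2) := by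
          refine ENNReal.tsum_le_tsum fun l => ?_
          calc b ^ l.1.length = ((c ^ 2)⁻¹ * c ^ 2) * b ^ l.1.length := by
                rw [ENNReal.inv_mul_cancel (by simp [hc0]) (ENNReal.pow_ne_top hctop), one_mul]
            _ = (c ^ 2)⁻¹ * (a ^ l.1.length * (c * r ^ l.1.length) ^ 2) := by
                rw [hab, mul_pow, mul_pow, ← pow_mul, ← pow_mul, mul_comm 2]; ring
            _ ≤ _ := by gcongr; exact l.2
      _ = (c ^ 2)⁻¹ * ∑' l : ι N, a ^ l.1.length * g N l.1 ^ 2 := ENNReal.tsum_mul_left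
      _ ≤ (c ^ 2)⁻¹ * weightedSq (fun l : List (Fin n → Fin 2) => a ^ l.length) (g N) := by
          gcongr
          exact ENNReal.tsum_comp_le_tsum_of_injective Subtype.val_injective
            (fun l : List (Fin n → Fin 2) => a ^ l.length * g N l ^ 2)
      _ ≤ δ N := by simp only [hδ]; gcongr; exact (hgN N).le
  have hs : 0 < s := ht.trans hts
  refine le_antisymm ?_ bot_le
  refine (Measure.hausdorffMeasure_le_liminf_tsum (l := Filter.atTop) (ι := ι) s _
    (fun N => δ N ^ s⁻¹) ?_ T ?_ ?_).trans ?_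
  · have := (ENNReal.continuous_rpow_const (y := s⁻¹)).tendsto 0
    rw [ENNReal.zero_rpow_of_pos (by positivity)] at this
    exact this.comp hδlim
  · refine Filter.Eventually.of_forall fun N l => ?_
    rw [ENNReal.le_rpow_inv_iff hs]
    exact (hdiams N l).trans ((ENNReal.le_tsum l).trans (hsum N))
  · refine Filter.Eventually.of_forall fun N => ?_
    rintro _ ⟨x, hx, rfl⟩
    obtain ⟨k, hk⟩ : ∃ k, c * r ^ k ≤ g N (PiNat.res x k) := by
      by_contra! hcon
      exact absurd ((hg N x hx).trans (ENNReal.tsum_le_tsum fun k => (hcon k).le)) (not_le.2 hc)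
    refine mem_iUnion.2 ⟨⟨PiNat.res x k, by rw [PiNat.res_length]; exact hk⟩, x, ?_, rfl⟩
    simp [PiNat.res_length]
  · have hle : ∀ N, ∑' l, ediam (T N l) ^ s ≤ δ N := fun N =>
      (ENNReal.tsum_le_tsum fun l => hdiams N l).trans (hsum N)
    refine (Filter.liminf_le_liminf (Filter.Eventually.of_forall hle)).trans ?_
    exact hδlim.liminf_eq.le

/-- The integer coordinates, at scale `2 ^ (-k)`, of the dyadic cube of a coded point. -/
def dyadicIndex {n : ℕ} (x : ℕ → Fin n → Fin 2) : ℕ → Fin n → ℤ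
  | 0 => 0
  | k + 1 => fun i => 2 * dyadicIndex x k i + (x k i : ℕ)

theorem mem_cylinder_of_dyadicIndex_eq {x y : ℕ → Fin n → Fin 2} {k : ℕ}
    (h : dyadicIndex x k = dyadicIndex y k) : x ∈ PiNat.cylinder y k := by
  induction k with
  | zero => simp
  | succ k ih =>
    have hi : ∀ i, dyadicIndex x k i = dyadicIndex y k i ∧ x k i = y k i := by
      intro i
      have := congrFun h i
      simp only [dyadicIndex] at this
      have h1 := (x k i).2
      have h2 := (y k i).2
      refine ⟨by omega, Fin.ext (by omega)⟩
    have hc := ih (funext fun i => (hi i).1)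
    rw [PiNat.mem_cylinder_iff] at hc ⊢
    intro j hj
    rcases Nat.lt_succ_iff_lt_or_eq.1 hj with h' | rfl
    exacts [hc j h', funext fun i => (hi i).2]

theorem dyadicIndex_bounds (x : ℕ → Fin n → Fin 2) (k : ℕ) (i : Fin n) :
    (dyadicIndex x k i : ℝ) ≤ 2 ^ k * (cubeCode m x i - m i) ∧
      2 ^ k * (cubeCode m x i - m i) ≤ dyadicIndex x k i + 1 := by
  have hS : ∀ k : ℕ, (2 : ℝ) ^ k * ∑ j ∈ Finset.range k, Real.ofDigitsTerm (fun j => x j i) j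
      = dyadicIndex x k i := by
    intro k
    induction k with
    | zero => simp [dyadicIndex]
    | succ k ih =>
      rw [Finset.sum_range_succ, mul_add, pow_succ', mul_assoc, ih]
      simp only [dyadicIndex, Real.ofDigitsTerm]
      push_cast
      field_simp
      ring
  have h := Real.ofDigits_eq_sum_add_ofDigits (fun j => x j i) k
  have h0 := Real.ofDigits_nonneg (fun j => x (j + k) i)
  have h1 := Real.ofDigits_le_one (fun j => x (j + k) i)
  have hval : 2 ^ k * (cubeCode m x i - m i)
      = dyadicIndex x k i + Real.ofDigits (fun j => x (j + k) i) := by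
    simp only [cubeCode, add_sub_cancel_left]
    rw [h, mul_add, hS]
    push_cast
    field_simp
  constructor <;> linarith

theorem measure_map_cubeCode_closedBall_le {t : ℝ} (ht : 0 < t)
    (μ : Measure (ℕ → Fin n → Fin 2)) [IsProbabilityMeasure μ] {C : ℝ≥0∞}
    (hμ : ∀ x k, μ (PiNat.cylinder x k) ≤ C * (2 ^ (-t)) ^ k) (y : Fin n → ℝ) {r : ℝ}
    (hr : 0 < r) :
    μ.map (cubeCode m) (closedBall y r) ≤ (4 ^ n * C * 2 ^ t + 1) * ENNReal.ofReal (r ^ t) := by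
  have hmeas := (continuous_cubeCode m).measurable
  rcases le_or_gt 1 r with h1 | h1
  · have : IsProbabilityMeasure (μ.map (cubeCode m)) :=
      Measure.isProbabilityMeasure_map hmeas.aemeasurable
    calc μ.map (cubeCode m) (closedBall y r) ≤ 1 * 1 := by simpa using prob_le_one
      _ ≤ _ := by
        gcongr
        · exact le_add_self
        · exact ENNReal.one_le_ofReal.2 (Real.one_le_rpow h1 ht.le)
  obtain ⟨k, hk1, hk2⟩ := exists_nat_pow_near_of_lt_one hr h1.le (show (0 : ℝ) < 2⁻¹ by norm_num)
    (by norm_num)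
  rw [Measure.map_apply hmeas measurableSet_closedBall]
  let F : Finset (Fin n → ℤ) := Fintype.piFinset fun i =>
    Finset.Icc ⌈2 ^ k * (y i - m i) - 2⌉ ⌊2 ^ k * (y i - m i) + 1⌋
  have hF : F.card ≤ 4 ^ n := by
    rw [Fintype.card_piFinset]
    refine (Finset.prod_le_pow_card _ _ 4 fun i _ => ?_).trans (by simp)
    rw [Int.card_Icc]
    have h2 := Int.floor_le (2 ^ k * (y i - m i) + 1)
    have h3 := Int.le_ceil (2 ^ k * (y i - m i) - 2)
    have : (⌊2 ^ k * (y i - m i) + 1⌋ : ℝ) ≤ ⌈2 ^ k * (y i - m i) - 2⌉ + 3 := by linarith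
    have : ⌊2 ^ k * (y i - m i) + 1⌋ ≤ ⌈2 ^ k * (y i - m i) - 2⌉ + 3 := by exact_mod_cast this
    omega
  have hcover : cubeCode m ⁻¹' closedBall y r ⊆ ⋃ N ∈ F, {x | dyadicIndex x k = N} := by
    intro x hx
    simp only [mem_iUnion, mem_ofPred_eq, exists_prop, exists_eq_right']
    refine Fintype.mem_piFinset.2 fun i => ?_
    have hxi : |cubeCode m x i - y i| ≤ r := (dist_pi_le_iff hr.le).1 hx i
    obtain ⟨hb1, hb2⟩ := dyadicIndex_bounds m x k i
    have hrk : 2 ^ k * r ≤ 1 := by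
      calc (2 : ℝ) ^ k * r ≤ 2 ^ k * 2⁻¹ ^ k := by gcongr
        _ = 1 := by rw [← mul_pow]; norm_num
    have hp : (0 : ℝ) < 2 ^ k := by positivity
    rw [abs_le] at hxi
    have hu : 2 ^ k * (cubeCode m x i - y i) ≤ 2 ^ k * r := by gcongr; exact hxi.2
    have hl : 2 ^ k * (-r) ≤ 2 ^ k * (cubeCode m x i - y i) := by gcongr; exact hxi.1
    rw [Finset.mem_Icc, Int.ceil_le, Int.le_floor]
    constructor <;> nlinarith
  have hpiece : ∀ N ∈ F, μ {x | dyadicIndex x k = N} ≤ C * (2 ^ (-t)) ^ k := by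
    intro N _
    rcases eq_empty_or_nonempty {x | dyadicIndex (n := n) x k = N} with h | ⟨z, hz⟩
    · rw [h]; simp
    · refine (measure_mono fun x hx => ?_).trans (hμ z k)
      have hx' : dyadicIndex x k = N := hx
      have hz' : dyadicIndex z k = N := hz
      exact mem_cylinder_of_dyadicIndex_eq (hx'.trans hz'.symm)
  have hak : ((2 : ℝ≥0∞) ^ (-t)) ^ k ≤ 2 ^ t * ENNReal.ofReal (r ^ t) := by
    have h2 : (2 : ℝ≥0∞) = ENNReal.ofReal 2 := by simp
    rw [h2, ENNReal.ofReal_rpow_of_pos two_pos, ENNReal.ofReal_rpow_of_pos two_pos,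
      ← ENNReal.ofReal_pow (by positivity), ← ENNReal.ofReal_mul (by positivity)]
    refine ENNReal.ofReal_le_ofReal ?_
    rw [← Real.mul_rpow two_pos.le hr.le, ← Real.rpow_natCast, ← Real.rpow_mul two_pos.le,
      neg_mul_comm, mul_comm, Real.rpow_mul two_pos.le]
    refine Real.rpow_le_rpow (by positivity) ?_ ht.le
    rw [Real.rpow_neg two_pos.le, Real.rpow_natCast, ← inv_pow]
    rw [pow_succ] at hk1
    linarith
  calc μ (cubeCode m ⁻¹' closedBall y r) ≤ ∑ N ∈ F, μ {x | dyadicIndex x k = N} :=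
        (measure_mono hcover).trans (measure_biUnion_finset_le _ _)
    _ ≤ ∑ _N ∈ F, C * (2 ^ (-t)) ^ k := Finset.sum_le_sum hpiece
    _ = F.card * (C * (2 ^ (-t)) ^ k) := by rw [Finset.sum_const, nsmul_eq_mul]
    _ ≤ 4 ^ n * (C * (2 ^ t * ENNReal.ofReal (r ^ t))) := by
        gcongr
        exact_mod_cast hF
    _ = (4 ^ n * C * 2 ^ t) * ENNReal.ofReal (r ^ t) := by ring
    _ ≤ _ := by gcongr; exact le_self_add

end CubeCode

/-- Frostman's lemma for Borel sets: a set of dimension larger than `d` contains a compact set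
carrying a probability measure that satisfies a ball growth condition with exponent larger
than `d`. -/
theorem exists_frostman_measure {n : ℕ} {A : Set (Fin n → ℝ)} (hA : MeasurableSet A)
    {d : NNReal} (hd : (d : ℝ≥0∞) < dimH A) :
    ∃ (t : ℝ) (K : Set (Fin n → ℝ)) (μ : Measure (Fin n → ℝ)) (C : ℝ≥0∞), (d : ℝ) < t ∧ K ⊆ A ∧
      IsCompact K ∧ IsProbabilityMeasure μ ∧ μ Kᶜ = 0 ∧ C ≠ ∞ ∧
      ∀ y r, 0 < r → μ (closedBall y r) ≤ C * ENNReal.ofReal (r ^ t) := by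
  have hcover : A ⊆ ⋃ m : Fin n → ℤ, A ∩ {y | ∀ i, y i - m i ∈ Ico (0 : ℝ) 1} := by
    intro y hy
    refine mem_iUnion.2 ⟨fun i => ⌊y i⌋, hy, fun i => ⟨?_, ?_⟩⟩
    · have := Int.floor_le (y i); linarith
    · have := Int.lt_floor_add_one (y i); linarith
  have hlt := hd.trans_le (dimH_mono hcover)
  rw [dimH_iUnion, lt_iSup_iff] at hlt
  obtain ⟨m, hm⟩ := hlt
  obtain ⟨s, hds, hs⟩ := ENNReal.lt_iff_exists_nnreal_btwn.1 hm
  obtain ⟨t, hdt, hts⟩ := ENNReal.lt_iff_exists_nnreal_btwn.1 hds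
  norm_cast at hdt hts
  have ht0 : (0 : ℝ) < t := lt_of_le_of_lt d.2 (by exact_mod_cast hdt)
  set c := cubeCode fun i => (m i : ℝ) with hc
  have hcont : Continuous c := continuous_cubeCode _
  set E := c ⁻¹' A with hE
  have hsub : A ∩ {y | ∀ i, y i - m i ∈ Ico (0 : ℝ) 1} ⊆ c '' E := by
    rintro y ⟨hyA, hy⟩
    obtain ⟨x, rfl⟩ := exists_cubeCode_eq (fun i => (m i : ℝ)) hy
    exact ⟨x, hyA, rfl⟩
  have hcap : treeCap (2 ^ (-(t : ℝ)) : ℝ≥0∞) E ≠ 0 := by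
    intro h0
    have h1 := hausdorffMeasure_cubeCode_image_eq_zero (fun i => (m i : ℝ)) ht0
      (show (t : ℝ) < s by exact_mod_cast hts) h0
    have h2 := hausdorffMeasure_of_lt_dimH hs
    have h3 := measure_mono (μ := μH[(s : ℝ)]) hsub
    rw [h2, h1] at h3
    simp at h3
  obtain ⟨c₀, hc₀, hcE⟩ := exists_between (pos_iff_ne_zero.2 hcap)
  obtain ⟨K, hKE, hK, hcK⟩ := exists_isCompact_le_treeCap _
    (hA.preimage hcont.measurable).analyticSet hcE
  obtain ⟨μ, C, hμ, hC, hμK, hcyl⟩ := exists_measure_cylinder_le _ hK.isClosed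
    (hc₀.trans_le hcK).ne'
  refine ⟨t, c '' K, μ.map c, 4 ^ n * C * 2 ^ (t : ℝ) + 1, by exact_mod_cast hdt,
    image_subset_iff.2 hKE, hK.image hcont,
    Measure.isProbabilityMeasure_map hcont.measurable.aemeasurable, ?_, ?_, ?_⟩
  · rw [Measure.map_apply hcont.measurable (hK.image hcont).isClosed.measurableSet.compl]
    refine measure_mono_null ?_ hμK
    intro x hx hxK
    exact hx (mem_image_of_mem _ hxK)
  · refine ENNReal.add_ne_top.2 ⟨ENNReal.mul_ne_top (ENNReal.mul_ne_top (by simp) hC) ?_, by simp⟩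
    exact ENNReal.rpow_ne_top_of_nonneg ht0.le (by simp)
  · intro y r hr
    exact measure_map_cubeCode_closedBall_le _ ht0 μ hcyl y hr

/-- A measure with ball growth exponent larger than `d` has uniformly bounded Riesz potential of
order `d`. -/
theorem exists_lintegral_edist_pow_inv_le {X : Type*} [PseudoMetricSpace X] [MeasurableSpace X]
    [OpensMeasurableSpace X] {μ : Measure X} [IsProbabilityMeasure μ] {d : ℕ} {t : ℝ}
    (hdt : (d : ℝ) < t) {C : ℝ≥0∞} (hC : C ≠ ∞)
    (hμ : ∀ y r, 0 < r → μ (closedBall y r) ≤ C * ENNReal.ofReal (r ^ t)) :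
    ∃ M : ℝ≥0∞, M ≠ ∞ ∧ ∀ y, ∫⁻ x, (edist x y ^ d)⁻¹ ∂μ ≤ M := by
  set q : ℝ≥0∞ := ENNReal.ofReal (2 ^ (d - t)) with hq
  have hq1 : q < 1 := by
    rw [hq, ENNReal.ofReal_lt_one]
    exact Real.rpow_lt_one_of_one_lt_of_neg one_lt_two (by linarith)
  refine ⟨1 + C * 2 ^ d * (1 - q)⁻¹, ENNReal.add_ne_top.2 ⟨by simp, ENNReal.mul_ne_top
    (ENNReal.mul_ne_top hC (by simp)) (by simpa [tsub_eq_zero_iff_le] using hq1)⟩, fun y => ?_⟩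
  have hpt : ∀ x, (edist x y ^ d)⁻¹ ≤ 1 + ∑' k : ℕ, (closedBall y ((2⁻¹ : ℝ) ^ k)).indicator
      (fun _ => ((2 : ℝ≥0∞) ^ (k + 1)) ^ d) x := by
    intro x
    rcases le_or_gt 1 (dist x y) with h1 | h1
    · refine le_trans ?_ le_self_add
      rw [ENNReal.inv_le_one]
      refine one_le_pow_of_one_le' ?_ d
      rw [edist_dist]
      exact ENNReal.one_le_ofReal.2 h1
    refine le_trans ?_ le_add_self
    rcases (dist_nonneg (x := x) (y := y)).eq_or_lt with h0 | h0
    · have hx : ∀ k : ℕ, x ∈ closedBall y ((2⁻¹ : ℝ) ^ k) := fun k => by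
        rw [mem_closedBall, ← h0]; positivity
      simp only [indicator_of_mem (hx _)]
      have : ∑' k : ℕ, ((2 : ℝ≥0∞) ^ (k + 1)) ^ d = ∞ := by
        refine top_le_iff.1 ?_
        rw [← ENNReal.tsum_const_eq_top_of_ne_zero (α := ℕ) one_ne_zero]
        exact ENNReal.tsum_le_tsum fun k => one_le_pow_of_one_le'
          (one_le_pow_of_one_le' (by norm_num) _) _
      rw [this]; exact le_top
    · obtain ⟨k, hk1, hk2⟩ := exists_nat_pow_near_of_lt_one h0 h1.le
        (show (0 : ℝ) < 2⁻¹ by norm_num) (by norm_num)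
      refine le_trans ?_ (ENNReal.le_tsum k)
      rw [indicator_of_mem (mem_closedBall.2 hk2), ← ENNReal.inv_le_inv, inv_inv, ENNReal.inv_pow]
      gcongr
      rw [edist_dist, ENNReal.inv_pow]
      refine le_trans (le_of_eq ?_) (ENNReal.ofReal_le_ofReal hk1.le)
      rw [ENNReal.ofReal_pow (by norm_num), ENNReal.ofReal_inv_of_pos two_pos]
      simp
  calc ∫⁻ x, (edist x y ^ d)⁻¹ ∂μ
      ≤ ∫⁻ x, 1 + ∑' k : ℕ, (closedBall y ((2⁻¹ : ℝ) ^ k)).indicator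
          (fun _ => ((2 : ℝ≥0∞) ^ (k + 1)) ^ d) x ∂μ := lintegral_mono hpt
    _ = 1 + ∑' k : ℕ, ((2 : ℝ≥0∞) ^ (k + 1)) ^ d * μ (closedBall y ((2⁻¹ : ℝ) ^ k)) := by
        rw [lintegral_add_left measurable_const, lintegral_tsum fun k =>
          (measurable_const.indicator measurableSet_closedBall).aemeasurable]
        simp [lintegral_indicator_const measurableSet_closedBall]
    _ ≤ 1 + ∑' k : ℕ, C * 2 ^ d * q ^ k := by
        gcongr 1 + ?_
        refine ENNReal.tsum_le_tsum fun k => ?_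
        refine (mul_le_mul_right (hμ y _ (show (0 : ℝ) < 2⁻¹ ^ k by positivity)) _).trans
          (le_of_eq ?_)
        have h2 : (2 : ℝ≥0∞) = ENNReal.ofReal 2 := by simp
        rw [mul_left_comm, mul_assoc, hq, h2]
        congr 1
        rw [← ENNReal.ofReal_pow (by positivity), ← ENNReal.ofReal_pow (by positivity),
          ← ENNReal.ofReal_pow (by positivity), ← ENNReal.ofReal_pow (by positivity),
          ← ENNReal.ofReal_mul (by positivity), ← ENNReal.ofReal_mul (by positivity)]
        congr 1
        rw [Real.rpow_sub two_pos, Real.rpow_natCast, div_pow, ← Real.rpow_natCast (2⁻¹ : ℝ),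
          ← Real.rpow_mul (by norm_num), mul_comm (k : ℝ) t, Real.rpow_mul (by norm_num),
          Real.rpow_natCast, Real.inv_rpow two_pos.le, inv_pow]
        ring
    _ = 1 + C * 2 ^ d * (1 - q)⁻¹ := by rw [ENNReal.tsum_mul_left, ENNReal.tsum_geometric]

/-- A measure with ball growth exponent larger than `d` does not charge sets of dimension at most
`d`. -/
theorem measure_eq_zero_of_dimH_le {X : Type*} [MetricSpace X] [MeasurableSpace X] [BorelSpace X]
    {μ : Measure X} {d : ℕ} {t : ℝ} (hdt : (d : ℝ) < t) {C : ℝ≥0∞} (hC : C ≠ ∞)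
    (hμ : ∀ y r, 0 < r → μ (closedBall y r) ≤ C * ENNReal.ofReal (r ^ t)) {H : Set X}
    (hH : dimH H ≤ d) : μ H = 0 := by
  have ht : 0 < t := lt_of_le_of_lt d.cast_nonneg hdt
  have hle : (C + 1)⁻¹ • μ ≤ μH[t] := by
    refine Measure.le_hausdorffMeasure t _ 1 one_pos fun s hs => ?_
    rcases s.eq_empty_or_nonempty with rfl | ⟨y, hy⟩
    · simp
    have hball : ∀ r, 0 < r → ediam s ≤ ENNReal.ofReal r →
        ((C + 1)⁻¹ • μ) s ≤ ENNReal.ofReal r ^ t := by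
      intro r hr hsr
      have hsub : s ⊆ closedBall y r := fun x hx => by
        have := (edist_le_ediam_of_mem hx hy).trans hsr
        rwa [edist_dist, ENNReal.ofReal_le_ofReal_iff hr.le] at this
      rw [Measure.smul_apply, smul_eq_mul, ENNReal.ofReal_rpow_of_pos hr]
      calc (C + 1)⁻¹ * μ s ≤ (C + 1)⁻¹ * ((C + 1) * ENNReal.ofReal (r ^ t)) := by
            gcongr
            refine (measure_mono hsub).trans ((hμ y r hr).trans ?_)
            gcongr
            exact le_self_add
        _ = ENNReal.ofReal (r ^ t) := by
            rw [← mul_assoc, ENNReal.inv_mul_cancel (by simp) (by simp [hC]), one_mul]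
    have hfin : ediam s ≠ ∞ := (hs.trans_lt ENNReal.one_lt_top).ne
    refine ge_of_tendsto (f := fun r : ℝ => ENNReal.ofReal r ^ t)
      (x := nhdsWithin (ediam s).toReal (Ioi (ediam s).toReal)) ?_ ?_
    · have hcont : Continuous fun r : ℝ => ENNReal.ofReal r ^ t :=
        ENNReal.continuous_rpow_const.comp ENNReal.continuous_ofReal
      have := (hcont.tendsto (ediam s).toReal).mono_left
        (nhdsWithin_le_nhds (s := Ioi (ediam s).toReal))
      rwa [ENNReal.ofReal_toReal hfin] at this
    · filter_upwards [self_mem_nhdsWithin] with r hr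
      have hr' : (ediam s).toReal < r := hr
      refine hball r (lt_of_le_of_lt ENNReal.toReal_nonneg hr') ?_
      rw [← ENNReal.ofReal_toReal hfin]
      exact ENNReal.ofReal_le_ofReal hr'.le
  have hzero : μH[t] H = 0 := by
    have := hausdorffMeasure_of_dimH_lt (s := H) (d := t.toNNReal)
      (hH.trans_lt (by rw [← ENNReal.ofReal, ENNReal.lt_ofReal_iff_toReal_lt (by simp)]; simpa))
    rwa [Real.coe_toNNReal t ht.le] at this
  have h := hle H
  rw [hzero, Measure.smul_apply, smul_eq_mul, nonpos_iff_eq_zero, mul_eq_zero] at h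
  exact h.resolve_left (by simp [hC])

theorem dimH_hyperplane_le (d : ℕ) (c : ℝ) : dimH {x : Fin (d + 1) → ℝ | x 0 = c} ≤ d := by
  have hsub : {x : Fin (d + 1) → ℝ | x 0 = c} ⊆
      range fun y : Fin d → ℝ => (Fin.cons c y : Fin (d + 1) → ℝ) := by
    intro x hx
    have hx' : x 0 = c := hx
    exact ⟨Fin.tail x, by simp only [← hx', Fin.cons_self_tail]⟩
  have hlip : LipschitzWith 1 fun y : Fin d → ℝ => (Fin.cons c y : Fin (d + 1) → ℝ) := by
    refine LipschitzWith.of_edist_le fun x y => edist_pi_le_iff.2 fun i => ?_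
    refine Fin.cases ?_ (fun j => ?_) i
    · simp
    · simpa using edist_le_pi_edist x y j
  refine (dimH_mono hsub).trans (hlip.dimH_range_le.trans ?_)
  rw [Real.dimH_univ_pi_fin]

theorem ENNReal.sq_add_sq_eq_two_mul_add {a b : ℝ≥0∞} (ha : a ≠ ∞) (hb : b ≠ ∞) :
    a * a + b * b = 2 * (a * b) + ((a - b) + (b - a)) ^ 2 := by
  wlog h : a ≤ b generalizing a b
  · have := this hb ha (le_of_not_ge h)
    rw [add_comm, this, mul_comm a b, add_comm (a - b)]
  obtain ⟨c, rfl⟩ := exists_add_of_le h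
  rw [tsub_eq_zero_of_le h, ENNReal.add_sub_cancel_left ha]
  ring

theorem ENNReal.sq_le_two_mul_sq_add (a b : ℝ≥0∞) :
    a * a ≤ 2 * (b * b) + 2 * ((a - b) + (b - a)) ^ 2 := by
  have h1 : a ≤ b + ((a - b) + (b - a)) :=
    le_add_tsub.trans (by gcongr; exact le_self_add)
  calc a * a = a ^ 2 := (sq a).symm
    _ ≤ (b + ((a - b) + (b - a))) ^ 2 := by gcongr
    _ ≤ _ := by rw [← sq b]; exact le_self_add.trans (ENNReal.parallelogram_le _ _)

section

variable {X : Type*} [MeasurableSpace X] {Λ : Measure X}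

/-- If the correlations of a sequence of bounded functions converge, then its squares are uniformly
absolutely continuous. -/
theorem tendsto_setLIntegral_mul_self_zero {F : ℕ → X → ℝ≥0∞} (hF : ∀ j, Measurable (F j))
    {c : ℕ → ℝ≥0∞} (hc : ∀ j, c j ≠ ∞) (hFc : ∀ j x, F j x ≤ c j) {J : ℝ≥0∞} (hJ : J ≠ ∞)
    (hlim : Filter.Tendsto (fun p : ℕ × ℕ => ∫⁻ x, F p.1 x * F p.2 x ∂Λ)
      (Filter.atTop ×ˢ Filter.atTop) (nhds J))
    {N : ℕ → Set X} (hN : Filter.Tendsto (fun j => Λ (N j)) Filter.atTop (nhds 0)) :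
    Filter.Tendsto (fun j => ∫⁻ x in N j, F j x * F j x ∂Λ) Filter.atTop (nhds 0) := by
  have hfin : ∀ j x, F j x ≠ ∞ := fun j x => ((hFc j x).trans_lt (hc j).lt_top).ne
  set D : ℕ × ℕ → ℝ≥0∞ := fun p =>
    ∫⁻ x, ((F p.1 x - F p.2 x) + (F p.2 x - F p.1 x)) ^ 2 ∂Λ with hD
  have hid : ∀ p : ℕ × ℕ, (∫⁻ x, F p.1 x * F p.1 x ∂Λ) + ∫⁻ x, F p.2 x * F p.2 x ∂Λ
      = 2 * (∫⁻ x, F p.1 x * F p.2 x ∂Λ) + D p := by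
    intro p
    have hmul : ∀ i j, Measurable fun x => F i x * F j x := fun i j => (hF i).mul (hF j)
    rw [hD, ← lintegral_add_left (hmul _ _), ← lintegral_const_mul _ (hmul _ _),
      ← lintegral_add_left ((hmul _ _).const_mul 2)]
    exact lintegral_congr fun x => ENNReal.sq_add_sq_eq_two_mul_add (hfin _ x) (hfin _ x)
  have hdiag : Filter.Tendsto (fun j => ∫⁻ x, F j x * F j x ∂Λ) Filter.atTop (nhds J) :=
    hlim.comp (Filter.tendsto_id.prodMk Filter.tendsto_id)
  have hDlim : Filter.Tendsto D (Filter.atTop ×ˢ Filter.atTop) (nhds 0) := by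
    have h2 : Filter.Tendsto (fun p : ℕ × ℕ => 2 * ∫⁻ x, F p.1 x * F p.2 x ∂Λ)
        (Filter.atTop ×ˢ Filter.atTop) (nhds (2 * J)) :=
      ENNReal.Tendsto.const_mul hlim (Or.inr (by simp))
    have h1 := ENNReal.Tendsto.sub ((hdiag.comp Filter.tendsto_fst).add
      (hdiag.comp Filter.tendsto_snd)) h2 (Or.inl (ENNReal.add_ne_top.2 ⟨hJ, hJ⟩))
    rw [two_mul, tsub_self] at h1
    refine h1.congr' ?_
    filter_upwards [hlim.eventually (gt_mem_nhds hJ.lt_top)] with p hp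
    simp only [Function.comp_apply]
    rw [hid p, ENNReal.add_sub_cancel_left (ENNReal.mul_ne_top (by simp) hp.ne)]
  rw [ENNReal.tendsto_nhds_zero]
  intro ε hε
  rcases eq_or_ne ε ∞ with rfl | hεt
  · simp
  have hε4 : 0 < ε / 4 := ENNReal.div_pos hε.ne' (by simp)
  obtain ⟨m, hm⟩ : ∃ m, ∀ᶠ j in Filter.atTop, D (j, m) ≤ ε / 4 := by
    have := hDlim.eventually (ge_mem_nhds hε4)
    rw [Filter.prod_comm] at this
    obtain ⟨m, hm⟩ := (Filter.eventually_map.1 this).curry.exists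
    exact ⟨m, hm⟩
  have hcm : Filter.Tendsto (fun j => 2 * (c m * c m * Λ (N j))) Filter.atTop (nhds 0) := by
    have := ENNReal.Tendsto.const_mul (a := 2) (ENNReal.Tendsto.const_mul (a := c m * c m) hN
      (Or.inr (ENNReal.mul_ne_top (hc m) (hc m)))) (Or.inr (by simp))
    simpa using this
  have hε2 : 0 < ε / 2 := ENNReal.div_pos hε.ne' (by simp)
  filter_upwards [hm, hcm.eventually (ge_mem_nhds hε2)] with j hj1 hj2
  calc ∫⁻ x in N j, F j x * F j x ∂Λ
      ≤ ∫⁻ x in N j, 2 * (F m x * F m x) + 2 * ((F j x - F m x) + (F m x - F j x)) ^ 2 ∂Λ :=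
        lintegral_mono fun x => ENNReal.sq_le_two_mul_sq_add _ _
    _ = 2 * (∫⁻ x in N j, F m x * F m x ∂Λ)
          + 2 * ∫⁻ x in N j, ((F j x - F m x) + (F m x - F j x)) ^ 2 ∂Λ := by
        have hmul : Measurable fun x => F m x * F m x := (hF m).mul (hF m)
        rw [lintegral_add_left (hmul.const_mul 2), lintegral_const_mul _ hmul, lintegral_const_mul]
        exact (((hF _).sub (hF _)).add ((hF _).sub (hF _))).pow_const 2
    _ ≤ 2 * (c m * c m * Λ (N j)) + 2 * D (j, m) := by
        gcongr
        · rw [← setLIntegral_const]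
          exact lintegral_mono fun x => mul_le_mul' (hFc m x) (hFc m x)
        · exact setLIntegral_le_lintegral _ _
    _ ≤ ε / 2 + 2 * (ε / 4) := by gcongr
    _ = ε := by
        rw [show (4 : ℝ≥0∞) = 2 * 2 by norm_num, ← mul_div_assoc,
          ENNReal.mul_div_mul_left _ _ (by simp) (by simp), ENNReal.add_halves]

/-- Two sequences of bounded functions with converging self-correlations and with mutual
correlation bounded away from zero cannot be jointly supported on sets of vanishing measure. -/
theorem not_tendsto_measure_zero_of_tendsto_correlation {F G : ℕ → X → ℝ≥0∞}
    (hF : ∀ j, Measurable (F j)) (hG : ∀ j, Measurable (G j))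
    {c : ℕ → ℝ≥0∞} (hc : ∀ j, c j ≠ ∞) (hFc : ∀ j x, F j x ≤ c j) (hGc : ∀ j x, G j x ≤ c j)
    {JF JG J : ℝ≥0∞} (hJF : JF ≠ ∞) (hJG : JG ≠ ∞) (hJ : J ≠ 0)
    (hFlim : Filter.Tendsto (fun p : ℕ × ℕ => ∫⁻ x, F p.1 x * F p.2 x ∂Λ)
      (Filter.atTop ×ˢ Filter.atTop) (nhds JF))
    (hGlim : Filter.Tendsto (fun p : ℕ × ℕ => ∫⁻ x, G p.1 x * G p.2 x ∂Λ)
      (Filter.atTop ×ˢ Filter.atTop) (nhds JG))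
    (hlim : Filter.Tendsto (fun j => ∫⁻ x, F j x * G j x ∂Λ) Filter.atTop (nhds J))
    {N : ℕ → Set X} (hNm : ∀ j, MeasurableSet (N j))
    (hFG : ∀ j, ∀ᵐ x ∂Λ, x ∉ N j → F j x * G j x = 0) :
    ¬ Filter.Tendsto (fun j => Λ (N j)) Filter.atTop (nhds 0) := by
  intro hN
  have hsum := (tendsto_setLIntegral_mul_self_zero hF hc hFc hJF hFlim hN).add
    (tendsto_setLIntegral_mul_self_zero hG hc hGc hJG hGlim hN)
  rw [add_zero] at hsum
  refine hJ (tendsto_nhds_unique hlim (tendsto_of_tendsto_of_tendsto_of_le_of_le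
    tendsto_const_nhds hsum (fun _ => bot_le) fun j => ?_))
  have hind : ∫⁻ x, F j x * G j x ∂Λ = ∫⁻ x in N j, F j x * G j x ∂Λ := by
    rw [← lintegral_indicator (hNm j)]
    refine lintegral_congr_ae ?_
    filter_upwards [hFG j] with x hx
    by_cases hxN : x ∈ N j
    · rw [indicator_of_mem hxN]
    · rw [indicator_of_notMem hxN, hx hxN]
  have hmul : Measurable fun x => F j x * F j x := (hF j).mul (hF j)
  rw [← lintegral_add_left hmul, hind]
  refine lintegral_mono fun x => ?_
  rcases le_total (F j x) (G j x) with h | h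
  · exact (mul_le_mul_left h _).trans le_add_self
  · exact (mul_le_mul_right h _).trans le_self_add

end

section SlantedProjection

variable {d : ℕ}

/-- The projection along the direction `(1, v)` to the last `d` coordinates. -/
def slant (v : Fin d → ℝ) (x : Fin (d + 1) → ℝ) : Fin d → ℝ := fun i => x i.succ - x 0 * v i

/-- The normalized indicator function of a cube of side length `2 * δ`. -/
noncomputable def cubeKernel (δ : ℝ) : (Fin d → ℝ) → ℝ≥0∞ :=
  (closedBall 0 δ).indicator fun _ => (ENNReal.ofReal (2 * δ) ^ d)⁻¹

/-- The tent function supported on the ball of radius `R`. -/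
noncomputable def tent (R : ℝ) (v : Fin d → ℝ) : ℝ≥0∞ := ENNReal.ofReal (R - ‖v‖)

/-- The correlation of two smoothed point masses with difference `u` under slanted projections. -/
noncomputable def slantCorrelation (R δ ε : ℝ) (u : Fin (d + 1) → ℝ) : ℝ≥0∞ :=
  ∫⁻ v, tent R v * ∫⁻ z, cubeKernel δ z * cubeKernel ε (z - slant v u)

theorem slant_sub (v : Fin d → ℝ) (x y : Fin (d + 1) → ℝ) :
    slant v (x - y) = slant v x - slant v y := by
  ext i; simp [slant]; ring

theorem slant_neg (v : Fin d → ℝ) (x : Fin (d + 1) → ℝ) : slant v (-x) = -slant v x := by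
  ext i; simp [slant]; ring

theorem slant_eq (v : Fin d → ℝ) (x : Fin (d + 1) → ℝ) : slant v x = Fin.tail x - x 0 • v := rfl

theorem continuous_slant :
    Continuous fun p : (Fin d → ℝ) × (Fin (d + 1) → ℝ) => slant p.1 p.2 := by
  unfold slant; fun_prop

@[fun_prop]
theorem Measurable.slant {α : Type*} [MeasurableSpace α] {f : α → Fin d → ℝ}
    {g : α → Fin (d + 1) → ℝ} (hf : Measurable f) (hg : Measurable g) :
    Measurable fun a => slant (f a) (g a) :=
  continuous_slant.measurable.comp (hf.prodMk hg)

@[fun_prop]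
theorem measurable_cubeKernel (δ : ℝ) : Measurable (cubeKernel (d := d) δ) :=
  measurable_const.indicator measurableSet_closedBall

@[fun_prop]
theorem measurable_tent (R : ℝ) : Measurable (tent (d := d) R) := by
  unfold tent; fun_prop

theorem cubeKernel_le (δ : ℝ) (a : Fin d → ℝ) :
    cubeKernel δ a ≤ (ENNReal.ofReal (2 * δ) ^ d)⁻¹ :=
  indicator_le_self' (fun _ _ => bot_le) a

theorem cubeKernel_eq_zero {δ : ℝ} {a : Fin d → ℝ} (h : δ < ‖a‖) : cubeKernel δ a = 0 :=
  indicator_of_notMem (by simpa using h) _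

theorem lintegral_cubeKernel {δ : ℝ} (hδ : 0 < δ) : ∫⁻ a, cubeKernel (d := d) δ a = 1 := by
  rw [cubeKernel, lintegral_indicator_const measurableSet_closedBall,
    Real.volume_pi_closedBall _ hδ.le, Fintype.card_fin, ENNReal.ofReal_pow (by positivity)]
  exact ENNReal.inv_mul_cancel (by simp [hδ]) (ENNReal.pow_ne_top ENNReal.ofReal_ne_top)

theorem tent_le (R : ℝ) (v : Fin d → ℝ) : tent R v ≤ ENNReal.ofReal R :=
  ENNReal.ofReal_le_ofReal (by linarith [norm_nonneg v])

theorem tent_le_add (R : ℝ) (v w : Fin d → ℝ) : tent R v ≤ tent R w + ENNReal.ofReal ‖v - w‖ := by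
  refine le_trans (ENNReal.ofReal_le_ofReal ?_) ENNReal.ofReal_add_le
  have := norm_sub_norm_le w v
  rw [norm_sub_rev] at this
  linarith

theorem tent_eq_zero {R : ℝ} {v : Fin d → ℝ} (h : R ≤ ‖v‖) : tent R v = 0 :=
  ENNReal.ofReal_eq_zero.2 (by linarith)

theorem lintegral_tent_ne_top (R : ℝ) : ∫⁻ v, tent (d := d) R v ≠ ∞ := by
  have h : ∀ v, tent (d := d) R v ≤ (closedBall 0 R).indicator (fun _ => ENNReal.ofReal R) v := by
    intro v
    by_cases hv : v ∈ closedBall 0 R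
    · rw [indicator_of_mem hv]; exact tent_le R v
    · rw [tent_eq_zero (le_of_lt (by simpa using hv))]; exact bot_le
  refine ((lintegral_mono h).trans_lt ?_).ne
  rw [lintegral_indicator_const measurableSet_closedBall]
  exact ENNReal.mul_lt_top ENNReal.ofReal_lt_top measure_closedBall_lt_top

theorem slantCorrelation_neg (R δ ε : ℝ) (u : Fin (d + 1) → ℝ) :
    slantCorrelation R δ ε (-u) = slantCorrelation R ε δ u := by
  refine lintegral_congr fun v => ?_
  congr 1
  rw [← lintegral_sub_right_eq_self (fun z => cubeKernel δ z * _) (slant v u)]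
  refine lintegral_congr fun z => ?_
  rw [slant_neg, mul_comm]
  congr 2
  abel

/-- Change of variables in `slantCorrelation` for non-horizontal differences. -/
theorem slantCorrelation_eq (R δ ε : ℝ) {u : Fin (d + 1) → ℝ} (hu : u 0 ≠ 0) :
    slantCorrelation R δ ε u = ENNReal.ofReal |((u 0) ^ d)⁻¹| * ∫⁻ a, cubeKernel δ a *
      ∫⁻ b, cubeKernel ε b * tent R ((u 0)⁻¹ • (b - a + Fin.tail u)) := by
  have hscale : ∀ f : (Fin d → ℝ) → ℝ≥0∞, Measurable f →
      ∫⁻ v, f (u 0 • v) = ENNReal.ofReal |((u 0) ^ d)⁻¹| * ∫⁻ b, f b := by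
    intro f hf
    have h := Measure.map_addHaar_smul (volume : Measure (Fin d → ℝ)) hu
    rw [Module.finrank_fin_fun] at h
    rw [← smul_eq_mul, ← lintegral_smul_measure, ← h,
      lintegral_map hf (measurable_const_smul _)]
  calc slantCorrelation R δ ε u
      = ∫⁻ v, ∫⁻ a, tent R v * (cubeKernel δ a * cubeKernel ε (a - slant v u)) := by
        refine lintegral_congr fun v => ?_
        rw [lintegral_const_mul]
        fun_prop
    _ = ∫⁻ a, ∫⁻ v, tent R v * (cubeKernel δ a * cubeKernel ε (a - slant v u)) :=
        lintegral_lintegral_swap (by fun_prop)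
    _ = ∫⁻ a, ENNReal.ofReal |((u 0) ^ d)⁻¹| * (cubeKernel δ a *
          ∫⁻ b, cubeKernel ε b * tent R ((u 0)⁻¹ • (b - a + Fin.tail u))) := by
        refine lintegral_congr fun a => ?_
        have h1 := hscale (fun b => cubeKernel δ a * (cubeKernel ε (b + a - Fin.tail u) *
          tent R ((u 0)⁻¹ • b))) (by fun_prop)
        have h2 : ∫⁻ v, tent R v * (cubeKernel δ a * cubeKernel ε (a - slant v u))
            = ∫⁻ v, cubeKernel δ a * (cubeKernel ε (u 0 • v + a - Fin.tail u) *
              tent R ((u 0)⁻¹ • u 0 • v)) := by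
          refine lintegral_congr fun v => ?_
          rw [inv_smul_smul₀ hu, slant_eq, show a - (Fin.tail u - u 0 • v)
            = u 0 • v + a - Fin.tail u by abel]
          ring
        rw [h2, h1, lintegral_const_mul _ (by fun_prop),
          ← lintegral_add_right_eq_self _ (-a + Fin.tail u)]
        congr 2
        refine lintegral_congr fun b => ?_
        congr 3 <;> abel
    _ = _ := lintegral_const_mul _ (by fun_prop)

theorem lintegral_cubeKernel_mul_le {δ : ℝ} (hδ : 0 < δ) {g : (Fin d → ℝ) → ℝ≥0∞} {M : ℝ≥0∞}
    (h : ∀ a, ‖a‖ ≤ δ → g a ≤ M) : ∫⁻ a, cubeKernel δ a * g a ≤ M := by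
  calc ∫⁻ a, cubeKernel δ a * g a ≤ ∫⁻ a, cubeKernel δ a * M := by
        refine lintegral_mono fun a => ?_
        rcases le_or_gt ‖a‖ δ with ha | ha
        · exact mul_le_mul_right (h a ha) _
        · simp [cubeKernel_eq_zero ha]
    _ = M := by
        rw [lintegral_mul_const _ (measurable_cubeKernel δ), lintegral_cubeKernel hδ, one_mul]

theorem le_lintegral_cubeKernel_mul_add {δ : ℝ} (hδ : 0 < δ) {g : (Fin d → ℝ) → ℝ≥0∞}
    {M e : ℝ≥0∞} (hg : Measurable g) (h : ∀ a, ‖a‖ ≤ δ → M ≤ g a + e) :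
    M ≤ (∫⁻ a, cubeKernel δ a * g a) + e := by
  calc M = ∫⁻ a, cubeKernel (d := d) δ a * M := by
        rw [lintegral_mul_const _ (measurable_cubeKernel δ), lintegral_cubeKernel hδ, one_mul]
    _ ≤ ∫⁻ a, cubeKernel δ a * g a + cubeKernel δ a * e := by
        refine lintegral_mono fun a => ?_
        rcases le_or_gt ‖a‖ δ with ha | ha
        · rw [← mul_add]; exact mul_le_mul_right (h a ha) _
        · simp [cubeKernel_eq_zero ha]
    _ = _ := by
        have hmul : Measurable fun a => cubeKernel δ a * g a := (measurable_cubeKernel δ).mul hg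
        rw [lintegral_add_left hmul, lintegral_mul_const _ (measurable_cubeKernel δ),
          lintegral_cubeKernel hδ, one_mul]

theorem tendsto_slantCorrelation (R : ℝ) {u : Fin (d + 1) → ℝ} (hu : u 0 ≠ 0) {ι : Type*}
    {l : Filter ι} {δ ε : ι → ℝ} (hδ0 : ∀ i, 0 < δ i) (hε0 : ∀ i, 0 < ε i)
    (hδ : Filter.Tendsto δ l (nhds 0)) (hε : Filter.Tendsto ε l (nhds 0)) :
    Filter.Tendsto (fun i => slantCorrelation R (δ i) (ε i) u) l
      (nhds (ENNReal.ofReal |((u 0) ^ d)⁻¹| * tent R ((u 0)⁻¹ • Fin.tail u))) := by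
  set c := ENNReal.ofReal |((u 0) ^ d)⁻¹| with hc
  set T := tent R ((u 0)⁻¹ • Fin.tail u) with hT
  set e : ι → ℝ≥0∞ := fun i => ENNReal.ofReal (|(u 0)⁻¹| * (δ i + ε i)) with he
  have he0 : Filter.Tendsto e l (nhds 0) := by
    have : Filter.Tendsto (fun i => |(u 0)⁻¹| * (δ i + ε i)) l (nhds 0) := by
      simpa using (hδ.add hε).const_mul |(u 0)⁻¹|
    simpa only [ENNReal.ofReal_zero] using ENNReal.tendsto_ofReal this
  have hnorm : ∀ i, ∀ a b : Fin d → ℝ, ‖a‖ ≤ δ i → ‖b‖ ≤ ε i →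
      ENNReal.ofReal ‖(u 0)⁻¹ • (b - a + Fin.tail u) - (u 0)⁻¹ • Fin.tail u‖ ≤ e i := by
    intro i a b ha hb
    refine ENNReal.ofReal_le_ofReal ?_
    rw [← smul_sub, add_sub_cancel_right, norm_smul, Real.norm_eq_abs]
    gcongr
    linarith [norm_sub_le b a]
  have hup : ∀ i, slantCorrelation R (δ i) (ε i) u ≤ c * (T + e i) := by
    intro i
    rw [slantCorrelation_eq R _ _ hu]
    gcongr
    refine lintegral_cubeKernel_mul_le (hδ0 i) fun a ha =>
      lintegral_cubeKernel_mul_le (hε0 i) fun b hb => ?_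
    exact (tent_le_add R _ _).trans (add_le_add le_rfl (hnorm i a b ha hb))
  have hlow : ∀ i, c * (T - e i) ≤ slantCorrelation R (δ i) (ε i) u := by
    intro i
    rw [slantCorrelation_eq R _ _ hu]
    gcongr
    rw [tsub_le_iff_right]
    refine le_lintegral_cubeKernel_mul_add (hδ0 i) (by fun_prop) fun a ha =>
      le_lintegral_cubeKernel_mul_add (hε0 i) (by fun_prop) fun b hb => ?_
    refine (tent_le_add R _ _).trans (add_le_add le_rfl ?_)
    rw [norm_sub_rev]
    exact hnorm i a b ha hb
  have hTt : T ≠ ∞ := ENNReal.ofReal_ne_top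
  refine tendsto_of_tendsto_of_tendsto_of_le_of_le ?_ ?_ hlow hup
  · have h := ENNReal.Tendsto.sub (tendsto_const_nhds (x := T) (f := l)) he0 (Or.inl hTt)
    rw [tsub_zero] at h
    exact ENNReal.Tendsto.const_mul h (Or.inr ENNReal.ofReal_ne_top)
  · have h := (tendsto_const_nhds (x := T) (f := l)).add he0
    rw [add_zero] at h
    exact ENNReal.Tendsto.const_mul h (Or.inr ENNReal.ofReal_ne_top)

/-- The correlation kernel is dominated by a multiple of the Riesz kernel of order `d`. -/
theorem exists_slantCorrelation_le (hd : d ≠ 0) {R : ℝ} (hR : 1 ≤ R) :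
    ∃ C : ℝ≥0∞, C ≠ ∞ ∧ ∀ (δ ε : ℝ) (u : Fin (d + 1) → ℝ), 0 < δ → 0 < ε →
      slantCorrelation R δ ε u ≤ C * (‖u‖ₑ ^ d)⁻¹ := by
  set I := ∫⁻ v, tent (d := d) R v with hI
  have hIt : I ≠ ∞ := lintegral_tent_ne_top R
  refine ⟨ENNReal.ofReal (2 * R) ^ d * ENNReal.ofReal R + I * 2 ^ d + 1, by
    simp [ENNReal.add_eq_top, ENNReal.mul_eq_top, hIt], fun δ ε u hδ hε => ?_⟩
  rcases eq_or_ne u 0 with rfl | hu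
  · simp [hd, ENNReal.mul_top]
  have hu0 : 0 < ‖u‖ := norm_pos_iff.2 hu
  rcases le_or_gt ‖u‖ (2 * R * |u 0|) with hcase | hcase
  · have hτ : u 0 ≠ 0 := by
      intro h
      rw [h, abs_zero, mul_zero] at hcase
      linarith
    rw [slantCorrelation_eq R _ _ hτ]
    have h1 : ENNReal.ofReal |((u 0) ^ d)⁻¹| ≤ ENNReal.ofReal (2 * R) ^ d * (‖u‖ₑ ^ d)⁻¹ := by
      rw [← ofReal_norm, ← ENNReal.ofReal_pow hu0.le, ← ENNReal.ofReal_pow (by positivity),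
        ← ENNReal.ofReal_inv_of_pos (by positivity), ← ENNReal.ofReal_mul (by positivity)]
      refine ENNReal.ofReal_le_ofReal ?_
      rw [abs_inv, abs_pow, ← div_eq_mul_inv, le_div_iff₀ (by positivity), ← inv_pow, ← mul_pow]
      have hτ' : 0 < |u 0| := abs_pos.2 hτ
      refine pow_le_pow_left₀ (by positivity) ?_ d
      rw [inv_mul_le_iff₀ hτ']
      linarith
    have h2 : ∫⁻ a, cubeKernel δ a * ∫⁻ b, cubeKernel ε b *
        tent R ((u 0)⁻¹ • (b - a + Fin.tail u)) ≤ ENNReal.ofReal R :=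
      lintegral_cubeKernel_mul_le hδ fun a _ =>
        lintegral_cubeKernel_mul_le hε fun b _ => tent_le R _
    refine (mul_le_mul' h1 h2).trans ?_
    rw [mul_right_comm]
    gcongr
    rw [add_assoc]
    exact le_self_add
  · wlog hle : δ ≤ ε generalizing δ ε u
    · rw [← neg_neg u, slantCorrelation_neg, enorm_neg]
      exact this ε δ (-u) hε hδ (neg_ne_zero.2 hu) (by simpa using hu0) (by simpa using hcase)
        (le_of_not_ge hle)
    have hmain : slantCorrelation R δ ε u ≤ ∫⁻ v, tent (d := d) R v * (2 ^ d * (‖u‖ₑ ^ d)⁻¹) := by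
      refine lintegral_mono fun v => ?_
      rcases le_or_gt R ‖v‖ with hv | hv
      · simp [tent_eq_zero hv]
      gcongr
      refine lintegral_cubeKernel_mul_le hδ fun z hz => ?_
      rcases lt_or_ge ε ‖z - slant v u‖ with hz' | hz'
      · simp [cubeKernel_eq_zero hz']
      refine (cubeKernel_le _ _).trans ?_
      have hτlt : |u 0| < ‖u‖ := lt_of_le_of_lt (by nlinarith [abs_nonneg (u 0)]) hcase
      have huw : ‖u‖ ≤ ‖Fin.tail u‖ := by
        by_contra! hcon
        refine lt_irrefl ‖u‖ ((pi_norm_lt_iff hu0).2 fun i => ?_)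
        refine Fin.cases hτlt (fun j => ?_) i
        exact (norm_le_pi_norm (Fin.tail u) j).trans_lt hcon
      have hs : ‖slant v u‖ ≤ 2 * ε := by
        have := norm_sub_le z (z - slant v u)
        rw [sub_sub_cancel] at this
        linarith
      have hw : ‖Fin.tail u‖ ≤ ‖slant v u‖ + |u 0| * ‖v‖ := by
        have := norm_add_le (slant v u) (u 0 • v)
        rwa [slant_eq, sub_add_cancel, norm_smul, Real.norm_eq_abs, ← slant_eq] at this
      have hτv : |u 0| * ‖v‖ ≤ |u 0| * R := by gcongr
      have h4 : ‖u‖ ≤ 2 * (2 * ε) := by nlinarith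
      rw [← inv_inv ((2 : ℝ≥0∞) ^ d), ← ENNReal.mul_inv (by simp) (by simp), ENNReal.inv_le_inv,
        ENNReal.inv_mul_le_iff (by simp) (by simp), ← mul_pow]
      gcongr
      rw [← ofReal_norm, show (2 : ℝ≥0∞) = ENNReal.ofReal 2 by simp,
        ← ENNReal.ofReal_mul two_pos.le]
      exact ENNReal.ofReal_le_ofReal h4
    refine hmain.trans ?_
    rw [lintegral_mul_const _ (measurable_tent R), ← mul_assoc]
    gcongr
    rw [add_assoc, add_left_comm]
    exact le_self_add

end SlantedProjection

section SlantedIntersection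

variable {d : ℕ}

/-- The density at `p.2`, smoothed at scale `δ`, of the image of `μ` under `slant p.1`. -/
noncomputable def smoothedDensity (μ : Measure (Fin (d + 1) → ℝ)) (δ : ℝ)
    (p : (Fin d → ℝ) × (Fin d → ℝ)) : ℝ≥0∞ :=
  ∫⁻ x, cubeKernel δ (slant p.1 x - p.2) ∂μ

/-- Lebesgue measure on pairs (direction, point), weighted by a tent function in the direction. -/
noncomputable def tentMeasure (d : ℕ) (R : ℝ) : Measure ((Fin d → ℝ) × (Fin d → ℝ)) :=
  volume.withDensity fun p => tent R p.1

theorem measurable_smoothedDensity (μ : Measure (Fin (d + 1) → ℝ)) [SFinite μ] (δ : ℝ) :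
    Measurable (smoothedDensity μ δ) := by
  unfold smoothedDensity
  fun_prop

theorem smoothedDensity_le (μ : Measure (Fin (d + 1) → ℝ)) [IsProbabilityMeasure μ] (δ : ℝ)
    (p : (Fin d → ℝ) × (Fin d → ℝ)) :
    smoothedDensity μ δ p ≤ (ENNReal.ofReal (2 * δ) ^ d)⁻¹ := by
  refine (lintegral_mono fun x => cubeKernel_le δ _).trans ?_
  simp

theorem measurable_slantCorrelation (R δ ε : ℝ) :
    Measurable (slantCorrelation (d := d) R δ ε) := by
  unfold slantCorrelation
  fun_prop

theorem lintegral_smoothedDensity_mul (μ ν : Measure (Fin (d + 1) → ℝ)) [SFinite μ] [SFinite ν]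
    (R δ ε : ℝ) :
    ∫⁻ p, smoothedDensity μ δ p * smoothedDensity ν ε p ∂tentMeasure d R
      = ∫⁻ q, slantCorrelation R δ ε (q.1 - q.2) ∂μ.prod ν := by
  have hm1 : ∀ (δ : ℝ) (p : (Fin d → ℝ) × (Fin d → ℝ)),
      Measurable fun x => cubeKernel δ (slant p.1 x - p.2) := fun δ p => by fun_prop
  have hm2 : Measurable fun p => smoothedDensity μ δ p * smoothedDensity ν ε p :=
    (measurable_smoothedDensity μ δ).mul (measurable_smoothedDensity ν ε)
  rw [tentMeasure, lintegral_withDensity_eq_lintegral_mul _ (by fun_prop) hm2]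
  calc ∫⁻ p : (Fin d → ℝ) × (Fin d → ℝ),
        tent R p.1 * (smoothedDensity μ δ p * smoothedDensity ν ε p)
      = ∫⁻ p : (Fin d → ℝ) × (Fin d → ℝ), ∫⁻ q, tent R p.1 *
          (cubeKernel δ (slant p.1 q.1 - p.2) * cubeKernel ε (slant p.1 q.2 - p.2)) ∂μ.prod ν := by
        refine lintegral_congr fun p => ?_
        rw [lintegral_const_mul _ (by fun_prop), smoothedDensity, smoothedDensity,
          lintegral_prod_mul (hm1 δ p).aemeasurable (hm1 ε p).aemeasurable]
    _ = ∫⁻ q, (∫⁻ p : (Fin d → ℝ) × (Fin d → ℝ), tent R p.1 *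
          (cubeKernel δ (slant p.1 q.1 - p.2) * cubeKernel ε (slant p.1 q.2 - p.2))) ∂μ.prod ν :=
        lintegral_lintegral_swap (by fun_prop)
    _ = _ := by
        refine lintegral_congr fun q => ?_
        rw [Measure.volume_eq_prod, lintegral_prod _ (by fun_prop), slantCorrelation]
        refine lintegral_congr fun v => ?_
        simp only
        rw [lintegral_const_mul _ (by fun_prop)]
        congr 1
        rw [← lintegral_sub_left_eq_self _ (slant v q.1)]
        refine lintegral_congr fun z => ?_
        rw [slant_sub]
        congr 2 <;> abel

/-- The limiting correlation kernel. -/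
noncomputable def limitCorrelation (R : ℝ) (u : Fin (d + 1) → ℝ) : ℝ≥0∞ :=
  ENNReal.ofReal |((u 0) ^ d)⁻¹| * tent R ((u 0)⁻¹ • Fin.tail u)

theorem ae_prod_apply_zero_ne (μ ν : Measure (Fin (d + 1) → ℝ)) [SFinite μ] [SFinite ν]
    (hν : ∀ c, ν {x | x 0 = c} = 0) : ∀ᵐ q ∂μ.prod ν, (q.1 - q.2) 0 ≠ 0 := by
  have hmeas : MeasurableSet {q : (Fin (d + 1) → ℝ) × (Fin (d + 1) → ℝ) | (q.1 - q.2) 0 = 0} :=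
    (measurableSet_singleton (0 : ℝ)).preimage (by fun_prop)
  have : μ.prod ν {q | (q.1 - q.2) 0 = 0} = 0 := by
    rw [Measure.measure_prod_null hmeas]
    refine Filter.Eventually.of_forall fun x => ?_
    refine measure_mono_null (fun y hy => ?_) (hν (x 0))
    have hy' : (x - y) 0 = 0 := hy
    show y 0 = x 0
    rw [Pi.sub_apply] at hy'
    linarith
  rw [ae_iff]
  simpa using this

theorem tendsto_lintegral_smoothedDensity_mul (hd : d ≠ 0) (μ ν : Measure (Fin (d + 1) → ℝ))
    [IsProbabilityMeasure μ] [IsProbabilityMeasure ν] {M : ℝ≥0∞} (hM : M ≠ ∞)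
    (hμ : ∀ y, ∫⁻ x, (edist x y ^ d)⁻¹ ∂μ ≤ M) (hν : ∀ c, ν {x | x 0 = c} = 0)
    {R : ℝ} (hR : 1 ≤ R) {ι : Type*} {l : Filter ι} [l.IsCountablyGenerated] [l.NeBot]
    {δ ε : ι → ℝ} (hδ0 : ∀ i, 0 < δ i) (hε0 : ∀ i, 0 < ε i)
    (hδ : Filter.Tendsto δ l (nhds 0)) (hε : Filter.Tendsto ε l (nhds 0)) :
    ∫⁻ q, limitCorrelation R (q.1 - q.2) ∂μ.prod ν ≠ ∞ ∧
    Filter.Tendsto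
      (fun i => ∫⁻ p, smoothedDensity μ (δ i) p * smoothedDensity ν (ε i) p ∂tentMeasure d R) l
      (nhds (∫⁻ q, limitCorrelation R (q.1 - q.2) ∂μ.prod ν)) := by
  obtain ⟨C, hC, hbound⟩ := exists_slantCorrelation_le hd hR
  have hfin : ∫⁻ q, C * (‖q.1 - q.2‖ₑ ^ d)⁻¹ ∂μ.prod ν ≠ ∞ := by
    rw [lintegral_const_mul _ (by fun_prop), lintegral_prod_symm _ (by fun_prop)]
    refine ENNReal.mul_ne_top hC (ne_top_of_le_ne_top hM ?_)
    calc ∫⁻ y, ∫⁻ x, (‖x - y‖ₑ ^ d)⁻¹ ∂μ ∂ν ≤ ∫⁻ _, M ∂ν := lintegral_mono fun y => by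
          simpa only [edist_eq_enorm_sub] using hμ y
      _ = M := by simp
  have hlim := tendsto_lintegral_filter_of_dominated_convergence (μ := μ.prod ν) (l := l)
    (F := fun i q => slantCorrelation R (δ i) (ε i) (q.1 - q.2))
    (f := fun q => limitCorrelation R (q.1 - q.2)) (fun q => C * (‖q.1 - q.2‖ₑ ^ d)⁻¹)
    (Filter.Eventually.of_forall fun i =>
      (measurable_slantCorrelation R _ _).comp (measurable_fst.sub measurable_snd))
    (Filter.Eventually.of_forall fun i => Filter.Eventually.of_forall fun q =>
      hbound _ _ _ (hδ0 i) (hε0 i)) hfin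
    ((ae_prod_apply_zero_ne μ ν hν).mono fun q hq =>
      tendsto_slantCorrelation R hq hδ0 hε0 hδ hε)
  simp only [lintegral_smoothedDensity_mul]
  refine ⟨ne_top_of_le_ne_top hfin (le_of_tendsto' hlim fun i => lintegral_mono fun q =>
    hbound _ _ _ (hδ0 i) (hε0 i)), hlim⟩

theorem exists_lintegral_limitCorrelation_ne_zero (μ ν : Measure (Fin (d + 1) → ℝ))
    [IsProbabilityMeasure μ] [IsProbabilityMeasure ν] (hν : ∀ c, ν {x | x 0 = c} = 0) :
    ∃ R : ℝ, 1 ≤ R ∧ ∫⁻ q, limitCorrelation R (q.1 - q.2) ∂μ.prod ν ≠ 0 := by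
  by_contra! hcon
  have hmeas : ∀ R, Measurable fun q : (Fin (d + 1) → ℝ) × (Fin (d + 1) → ℝ) =>
      limitCorrelation R (q.1 - q.2) := fun R => by
    unfold limitCorrelation tent Fin.tail
    fun_prop
  have hall : ∀ᵐ q ∂μ.prod ν, ∀ k : ℕ, limitCorrelation (k + 1 : ℝ) (q.1 - q.2) = 0 := by
    refine ae_all_iff.2 fun k => ?_
    exact (lintegral_eq_zero_iff (hmeas _)).1 (hcon _ (by simp))
  obtain ⟨q, hq0, hq⟩ := ((ae_prod_apply_zero_ne μ ν hν).and hall).exists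
  set u := q.1 - q.2
  obtain ⟨k, hk⟩ := exists_nat_gt ‖(u 0)⁻¹ • Fin.tail u‖
  have h := hq k
  rw [limitCorrelation, mul_eq_zero, tent, ENNReal.ofReal_eq_zero, ENNReal.ofReal_eq_zero] at h
  rcases h with h | h
  · have : 0 < |((u 0) ^ d)⁻¹| := by positivity
    linarith
  · linarith

/-- The pairs `(v, z)` with `‖v‖ ≤ R` and `z` within `δ` of the slanted projection of `K`. -/
def slantNhd (K : Set (Fin (d + 1) → ℝ)) (R δ : ℝ) : Set ((Fin d → ℝ) × (Fin d → ℝ)) :=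
  (fun q : (Fin d → ℝ) × (Fin (d + 1) → ℝ) × (Fin d → ℝ) => (q.1, slant q.1 q.2.1 - q.2.2)) ''
    (closedBall 0 R ×ˢ K ×ˢ closedBall 0 δ)

theorem isCompact_slantNhd {K : Set (Fin (d + 1) → ℝ)} (hK : IsCompact K) (R δ : ℝ) :
    IsCompact (slantNhd K R δ) := by
  refine ((isCompact_closedBall _ _).prod (hK.prod (isCompact_closedBall _ _))).image ?_
  exact continuous_fst.prodMk ((continuous_slant.comp (continuous_fst.prodMk
    (continuous_fst.comp continuous_snd))).sub (continuous_snd.comp continuous_snd))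

theorem mem_slantNhd {K : Set (Fin (d + 1) → ℝ)} {R δ : ℝ} {p : (Fin d → ℝ) × (Fin d → ℝ)} :
    p ∈ slantNhd K R δ ↔ ‖p.1‖ ≤ R ∧ ∃ x ∈ K, ‖slant p.1 x - p.2‖ ≤ δ := by
  constructor
  · rintro ⟨⟨v, x, a⟩, ⟨hv, hx, ha⟩, rfl⟩
    exact ⟨by simpa using hv, x, hx, by simpa using ha⟩
  · rintro ⟨hv, x, hx, hd⟩
    exact ⟨(p.1, x, slant p.1 x - p.2), ⟨by simpa using hv, hx, by simpa using hd⟩, by simp⟩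

theorem smoothedDensity_eq_zero {μ : Measure (Fin (d + 1) → ℝ)} {K : Set (Fin (d + 1) → ℝ)}
    (hμ : μ Kᶜ = 0) {R δ : ℝ} {p : (Fin d → ℝ) × (Fin d → ℝ)} (hp : ‖p.1‖ ≤ R)
    (h : p ∉ slantNhd K R δ) : smoothedDensity μ δ p = 0 := by
  rw [smoothedDensity, ← lintegral_zero (μ := μ)]
  refine lintegral_congr_ae ?_
  filter_upwards [compl_mem_ae_iff.2 hμ] with x hx
  refine cubeKernel_eq_zero ?_
  by_contra! hle
  exact h (mem_slantNhd.2 ⟨hp, x, not_not.1 hx, hle⟩)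

theorem volume_slant_image_inter_pos (hd : d ≠ 0) {μ ν : Measure (Fin (d + 1) → ℝ)}
    [IsProbabilityMeasure μ] [IsProbabilityMeasure ν] {K L : Set (Fin (d + 1) → ℝ)}
    (hK : IsCompact K) (hL : IsCompact L) (hμK : μ Kᶜ = 0) (hνL : ν Lᶜ = 0)
    {M M' : ℝ≥0∞} (hM : M ≠ ∞) (hM' : M' ≠ ∞)
    (hμ : ∀ y, ∫⁻ x, (edist x y ^ d)⁻¹ ∂μ ≤ M) (hν : ∀ y, ∫⁻ x, (edist x y ^ d)⁻¹ ∂ν ≤ M')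
    (hμ0 : ∀ c, μ {x | x 0 = c} = 0) (hν0 : ∀ c, ν {x | x 0 = c} = 0) :
    0 < volume {v : Fin d → ℝ | 0 < volume (slant v '' K ∩ slant v '' L)} := by
  obtain ⟨R, hR, hJ⟩ := exists_lintegral_limitCorrelation_ne_zero μ ν hν0
  obtain ⟨δ, hδ0, hδlim, hδanti⟩ : ∃ δ : ℕ → ℝ, (∀ j, 0 < δ j) ∧
      Filter.Tendsto δ Filter.atTop (nhds 0) ∧ Antitone δ :=
    ⟨fun j => 1 / ((j : ℝ) + 1), fun j => by positivity, tendsto_one_div_add_atTop_nhds_zero_nat,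
      fun i j hij => one_div_le_one_div_of_le (by positivity) (by simpa)⟩
  set N : ℕ → Set ((Fin d → ℝ) × (Fin d → ℝ)) := fun j =>
    slantNhd K R (δ j) ∩ slantNhd L R (δ j) with hN
  have hNc : ∀ j, IsCompact (N j) := fun j =>
    (isCompact_slantNhd hK _ _).inter (isCompact_slantNhd hL _ _)
  have hNanti : Antitone N := by
    intro i j hij p hp
    simp only [hN, mem_inter_iff, mem_slantNhd] at hp ⊢
    obtain ⟨⟨hv, x, hx, hxd⟩, -, y, hy, hyd⟩ := hp
    exact ⟨⟨hv, x, hx, hxd.trans (hδanti hij)⟩, hv, y, hy, hyd.trans (hδanti hij)⟩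
  have hNInter : ∀ p ∈ ⋂ j, N j, p.2 ∈ slant p.1 '' K ∩ slant p.1 '' L := by
    have hone : ∀ {K : Set (Fin (d + 1) → ℝ)} {p}, IsCompact K → (∀ j, p ∈ slantNhd K R (δ j)) →
        p.2 ∈ slant p.1 '' K := by
      intro K p hK hp
      have hcl : IsClosed (slant p.1 '' K) :=
        (hK.image (continuous_slant.comp (Continuous.prodMk_right p.1))).isClosed
      rw [← hcl.closure_eq, Metric.mem_closure_iff]
      intro ε hε
      obtain ⟨j, hj⟩ := (hδlim.eventually (gt_mem_nhds hε)).exists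
      obtain ⟨-, x, hx, hxd⟩ := mem_slantNhd.1 (hp j)
      refine ⟨_, mem_image_of_mem _ hx, ?_⟩
      rw [dist_comm, dist_eq_norm]
      exact hxd.trans_lt hj
    intro p hp
    rw [mem_iInter] at hp
    exact ⟨hone hK fun j => (hp j).1, hone hL fun j => (hp j).2⟩
  have hle : tentMeasure d R ≤ ENNReal.ofReal R • volume := by
    rw [← withDensity_const]
    exact withDensity_mono (Filter.Eventually.of_forall fun p => tent_le R _)
  have hoff : ∀ᵐ p ∂tentMeasure d R, ‖p.1‖ ≤ R := by
    rw [tentMeasure, ae_withDensity_iff (by fun_prop)]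
    refine Filter.Eventually.of_forall fun p hp => ?_
    by_contra! hlt
    exact hp (tent_eq_zero hlt.le)
  have hpair : Filter.Tendsto (fun p : ℕ × ℕ => δ p.1) (Filter.atTop ×ˢ Filter.atTop) (nhds 0) :=
    hδlim.comp Filter.tendsto_fst
  have hpair' : Filter.Tendsto (fun p : ℕ × ℕ => δ p.2) (Filter.atTop ×ˢ Filter.atTop) (nhds 0) :=
    hδlim.comp Filter.tendsto_snd
  obtain ⟨hJμ, hμlim⟩ := tendsto_lintegral_smoothedDensity_mul hd μ μ hM hμ hμ0 hR
    (δ := fun p : ℕ × ℕ => δ p.1) (ε := fun p : ℕ × ℕ => δ p.2) (fun p => hδ0 p.1)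
    (fun p => hδ0 p.2) hpair hpair'
  obtain ⟨hJν, hνlim⟩ := tendsto_lintegral_smoothedDensity_mul hd ν ν hM' hν hν0 hR
    (δ := fun p : ℕ × ℕ => δ p.1) (ε := fun p : ℕ × ℕ => δ p.2) (fun p => hδ0 p.1)
    (fun p => hδ0 p.2) hpair hpair'
  obtain ⟨-, hlim⟩ := tendsto_lintegral_smoothedDensity_mul hd μ ν hM hμ hν0 hR hδ0 hδ0 hδlim hδlim
  have hnot := not_tendsto_measure_zero_of_tendsto_correlation (Λ := tentMeasure d R)
    (fun j => measurable_smoothedDensity μ (δ j)) (fun j => measurable_smoothedDensity ν (δ j))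
    (c := fun j => (ENNReal.ofReal (2 * δ j) ^ d)⁻¹)
    (fun j => by simp [hδ0 j]) (fun j => smoothedDensity_le μ (δ j))
    (fun j => smoothedDensity_le ν (δ j)) hJμ hJν hJ hμlim hνlim hlim
    (fun j => (hNc j).measurableSet) (fun j => by
      filter_upwards [hoff] with p hp hpN
      by_cases hpK : p ∈ slantNhd K R (δ j)
      · rw [smoothedDensity_eq_zero hνL hp fun hpL => hpN ⟨hpK, hpL⟩, mul_zero]
      · rw [smoothedDensity_eq_zero hμK hp hpK, zero_mul])
  have htend := tendsto_measure_iInter_atTop (μ := tentMeasure d R)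
    (fun j => (hNc j).measurableSet.nullMeasurableSet) hNanti
    ⟨0, ((hle _).trans_lt (ENNReal.mul_lt_top ENNReal.ofReal_lt_top (hNc 0).measure_lt_top)).ne⟩
  rw [pos_iff_ne_zero]
  intro h0
  have hvol : volume (⋂ j, N j) = 0 := by
    rw [Measure.volume_eq_prod, Measure.measure_prod_null
      (MeasurableSet.iInter fun j => (hNc j).measurableSet)]
    have hae : ∀ᵐ v : Fin d → ℝ, ¬ 0 < volume (slant v '' K ∩ slant v '' L) := by
      simpa only [ae_iff, not_not] using h0
    filter_upwards [hae] with v hv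
    refine measure_mono_null (fun z hz => ?_) (nonpos_iff_eq_zero.1 (not_lt.1 hv))
    exact hNInter (v, z) hz
  have hΛ : tentMeasure d R (⋂ j, N j) = 0 := withDensity_absolutelyContinuous _ _ hvol
  rw [hΛ] at htend
  exact hnot htend

end SlantedIntersection

/-- The affine chart `e ↦ (e₁ / e₀, …, e_d / e₀)` on lines through the origin. -/
noncomputable def lineChart {d : ℕ} (e : EuclideanSpace ℝ (Fin (d + 1))) : Fin d → ℝ :=
  fun i => e i.succ / e 0

theorem lipschitzOnWith_lineChart {d : ℕ} {c : NNReal} (hc : 0 < c) :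
    LipschitzOnWith (2 / c ^ 2) (lineChart (d := d)) {e | ‖e‖ = 1 ∧ (c : ℝ) ≤ e 0} := by
  refine LipschitzOnWith.of_dist_le_mul fun a ha b hb => ?_
  obtain ⟨ha, ha0⟩ := ha
  obtain ⟨hb, hb0⟩ := hb
  have hc' : (0 : ℝ) < c := hc
  refine (dist_pi_le_iff (by positivity)).2 fun i => ?_
  have hab (j) : |a j - b j| ≤ dist a b := by
    simpa [dist_eq_norm] using PiLp.norm_apply_le (a - b) j
  have hai (j) : |a j| ≤ 1 := by
    simpa [ha] using PiLp.norm_apply_le a j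
  have hpa : 0 < a 0 := hc'.trans_le ha0
  have hpb : 0 < b 0 := hc'.trans_le hb0
  have key : a i.succ / a 0 - b i.succ / b 0
      = (a i.succ * (b 0 - a 0) + a 0 * (a i.succ - b i.succ)) / (a 0 * b 0) := by
    field_simp
    ring
  have hnum : |a i.succ * (b 0 - a 0) + a 0 * (a i.succ - b i.succ)| ≤ 2 * dist a b := by
    have h₁ : |a i.succ| * |b 0 - a 0| ≤ 1 * dist a b :=
      mul_le_mul (hai _) (by rw [abs_sub_comm]; exact hab 0) (abs_nonneg _) zero_le_one
    have h₂ : |a 0| * |a i.succ - b i.succ| ≤ 1 * dist a b :=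
      mul_le_mul (hai _) (hab _) (abs_nonneg _) zero_le_one
    calc _ ≤ |a i.succ| * |b 0 - a 0| + |a 0| * |a i.succ - b i.succ| := by
          rw [← abs_mul, ← abs_mul]; exact abs_add_le _ _
      _ ≤ _ := by linarith
  rw [lineChart, lineChart, Real.dist_eq, key, abs_div, abs_of_pos (mul_pos hpa hpb)]
  have hden : (c : ℝ) ^ 2 ≤ a 0 * b 0 := by nlinarith
  calc _ ≤ 2 * dist a b / (c : ℝ) ^ 2 := by gcongr
    _ = _ := by push_cast; ring

/-- A set of unit vectors in the open half-space `e₀ > 0` whose chart image has positive Lebesgue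
measure has positive Hausdorff measure. -/
theorem hausdorffMeasure_pos_of_volume_lineChart_image_pos {d : ℕ}
    {S : Set (EuclideanSpace ℝ (Fin (d + 1)))} (hS : ∀ e ∈ S, ‖e‖ = 1)
    (h : 0 < volume (lineChart '' (S ∩ {e | 0 < e 0}))) : 0 < μH[(d : ℝ)] S := by
  contrapose! h
  have h0 : μH[(d : ℝ)] S = 0 := le_antisymm h bot_le
  have hsub : lineChart '' (S ∩ {e | 0 < e 0}) ⊆
      ⋃ N : ℕ, lineChart '' (S ∩ {e | ((1 / ((N : NNReal) + 1) : NNReal) : ℝ) ≤ e 0}) := by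
    rintro _ ⟨e, ⟨he, he0⟩, rfl⟩
    obtain ⟨N, hN⟩ := exists_nat_one_div_lt (show 0 < e 0 from he0)
    exact mem_iUnion.2 ⟨N, e, ⟨he, by simpa using hN.le⟩, rfl⟩
  refine (measure_mono hsub).trans (le_of_eq (measure_iUnion_null fun N => ?_))
  have hl := (lipschitzOnWith_lineChart (d := d) (c := 1 / ((N : NNReal) + 1)) (by positivity)).mono
    (s := S ∩ {e | ((1 / ((N : NNReal) + 1) : NNReal) : ℝ) ≤ e 0})
    (fun e he => ⟨hS e he.1, he.2⟩)
  have := hl.hausdorffMeasure_image_le (d := (d : ℝ)) (Nat.cast_nonneg d)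
  rw [measure_mono_null inter_subset_left h0, mul_zero] at this
  have hv := hausdorffMeasure_pi_real (ι := Fin d)
  rw [Fintype.card_fin] at hv
  rw [← hv]
  exact le_antisymm this bot_le

/-- The unit vector spanning the line with direction `(1, v)`. -/
noncomputable def unitDirection {d : ℕ} (v : Fin d → ℝ) : EuclideanSpace ℝ (Fin (d + 1)) :=
  ‖WithLp.toLp 2 (Fin.cons 1 v : Fin (d + 1) → ℝ)‖⁻¹ •
    WithLp.toLp 2 (Fin.cons 1 v : Fin (d + 1) → ℝ)

theorem toLp_cons_one_ne_zero {d : ℕ} (v : Fin d → ℝ) :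
    WithLp.toLp 2 (Fin.cons 1 v : Fin (d + 1) → ℝ) ≠ 0 := fun h => by
  simpa using congrArg (fun x : EuclideanSpace ℝ (Fin (d + 1)) => x 0) h

theorem norm_unitDirection {d : ℕ} (v : Fin d → ℝ) : ‖unitDirection v‖ = 1 := by
  rw [unitDirection, norm_smul, norm_inv, norm_norm]
  exact inv_mul_cancel₀ (norm_ne_zero_iff.2 (toLp_cons_one_ne_zero v))

theorem unitDirection_zero_pos {d : ℕ} (v : Fin d → ℝ) : 0 < unitDirection v 0 := by
  have := norm_pos_iff.2 (toLp_cons_one_ne_zero v)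
  simpa [unitDirection] using this

theorem unitDirection_succ {d : ℕ} (v : Fin d → ℝ) (i : Fin d) :
    unitDirection v i.succ = unitDirection v 0 * v i := by
  simp [unitDirection]

theorem lineChart_unitDirection {d : ℕ} (v : Fin d → ℝ) : lineChart (unitDirection v) = v := by
  funext i
  rw [lineChart, unitDirection_succ, mul_div_cancel_left₀ _ (unitDirection_zero_pos v).ne']

theorem slant_ofLp_sub_inner_smul {d : ℕ} (v : Fin d → ℝ) (x : EuclideanSpace ℝ (Fin (d + 1))) :
    slant v (x - ⟪x, unitDirection v⟫ • unitDirection v).ofLp = slant v x.ofLp := by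
  funext i
  simp only [slant, PiLp.sub_apply, PiLp.smul_apply, smul_eq_mul, unitDirection_succ]
  ring

theorem sub_inner_smul_eq_of_slant_eq {d : ℕ} {v : Fin d → ℝ}
    {x y : EuclideanSpace ℝ (Fin (d + 1))} (h : slant v x.ofLp = slant v y.ofLp) :
    x - ⟪x, unitDirection v⟫ • unitDirection v = y - ⟪y, unitDirection v⟫ • unitDirection v := by
  set e := unitDirection v with he
  have he0 : 0 < e 0 := unitDirection_zero_pos v
  have hxy : x - y = ((x 0 - y 0) / e 0) • e := by
    ext j
    refine Fin.cases ?_ (fun i => ?_) j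
    · simp [he0.ne']
    · have := congrFun h i
      simp only [slant] at this
      simp only [PiLp.sub_apply, PiLp.smul_apply, smul_eq_mul, he, unitDirection_succ]
      rw [← mul_assoc, div_mul_cancel₀ _ he0.ne']
      linarith
  have hee : ⟪e, e⟫ = (1 : ℝ) := by
    rw [real_inner_self_eq_norm_sq, norm_unitDirection, one_pow]
  have hin : ⟪x, e⟫ - ⟪y, e⟫ = (x 0 - y 0) / e 0 := by
    rw [← inner_sub_left, hxy, real_inner_smul_left, hee, mul_one]
  rw [← sub_eq_zero, sub_sub_sub_comm, ← sub_smul, hin, hxy, sub_self]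

theorem exists_lipschitzWith_slant_ofLp {d : ℕ} (v : Fin d → ℝ) :
    ∃ C, LipschitzWith C fun x : EuclideanSpace ℝ (Fin (d + 1)) => slant v x.ofLp := by
  let f : EuclideanSpace ℝ (Fin (d + 1)) →ₗ[ℝ] (Fin d → ℝ) :=
    { toFun := fun x => slant v x.ofLp
      map_add' := fun x y => by
        funext i
        simp only [slant, PiLp.add_apply, Pi.add_apply]
        ring
      map_smul' := fun c x => by
        funext i
        simp only [slant, PiLp.smul_apply, Pi.smul_apply, smul_eq_mul, RingHom.id_apply]
        ring }
  exact ⟨_, f.toContinuousLinearMap.lipschitz⟩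

theorem hausdorffMeasure_proj_inter_pos {d : ℕ} {v : Fin d → ℝ}
    {A B : Set (EuclideanSpace ℝ (Fin (d + 1)))}
    (h : 0 < volume (slant v '' (WithLp.ofLp '' A) ∩ slant v '' (WithLp.ofLp '' B))) :
    0 < μH[(d : ℝ)] ((fun x => x - ⟪x, unitDirection v⟫ • unitDirection v) '' A ∩
      (fun x => x - ⟪x, unitDirection v⟫ • unitDirection v) '' B) := by
  obtain ⟨C, hC⟩ := exists_lipschitzWith_slant_ofLp v
  have hv := hausdorffMeasure_pi_real (ι := Fin d)
  rw [Fintype.card_fin] at hv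
  contrapose! h
  have hsub : slant v '' (WithLp.ofLp '' A) ∩ slant v '' (WithLp.ofLp '' B) ⊆
      (fun x : EuclideanSpace ℝ (Fin (d + 1)) => slant v x.ofLp) ''
        ((fun x => x - ⟪x, unitDirection v⟫ • unitDirection v) '' A ∩
          (fun x => x - ⟪x, unitDirection v⟫ • unitDirection v) '' B) := by
    rintro _ ⟨⟨_, ⟨a, ha, rfl⟩, rfl⟩, ⟨_, ⟨b, hb, rfl⟩, hab⟩⟩
    exact ⟨_, ⟨⟨a, ha, rfl⟩, ⟨b, hb, sub_inner_smul_eq_of_slant_eq hab⟩⟩,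
      slant_ofLp_sub_inner_smul v a⟩
  refine (measure_mono hsub).trans ?_
  rw [← hv]
  refine (hC.hausdorffMeasure_image_le (Nat.cast_nonneg d) _).trans ?_
  rw [le_antisymm h bot_le, mul_zero]

theorem exists_compact_measure_of_lt_dimH {d : ℕ} {A : Set (Fin (d + 1) → ℝ)}
    (hA : MeasurableSet A) (hd : (d : ℝ≥0∞) < dimH A) :
    ∃ (K : Set (Fin (d + 1) → ℝ)) (μ : Measure (Fin (d + 1) → ℝ)) (M : ℝ≥0∞), K ⊆ A ∧
      IsCompact K ∧ IsProbabilityMeasure μ ∧ μ Kᶜ = 0 ∧ M ≠ ∞ ∧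
      (∀ y, ∫⁻ x, (edist x y ^ d)⁻¹ ∂μ ≤ M) ∧ ∀ c, μ {x | x 0 = c} = 0 := by
  obtain ⟨t, K, μ, C, hdt, hKA, hK, hμ, hμK, hC, hgrowth⟩ :=
    exists_frostman_measure hA (d := (d : NNReal)) (by simpa using hd)
  have hdt' : (d : ℝ) < t := by simpa using hdt
  obtain ⟨M, hM, hMμ⟩ := exists_lintegral_edist_pow_inv_le hdt' hC hgrowth
  exact ⟨K, μ, M, hKA, hK, hμ, hμK, hM, hMμ, fun c =>
    measure_eq_zero_of_dimH_le hdt' hC hgrowth (dimH_hyperplane_le d c)⟩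

theorem volume_slant_image_inter_pos_of_lt_dimH {d : ℕ} (hd : d ≠ 0) {A B : Set (Fin (d + 1) → ℝ)}
    (hA : MeasurableSet A) (hB : MeasurableSet B)
    (hdA : (d : ℝ≥0∞) < dimH A) (hdB : (d : ℝ≥0∞) < dimH B) :
    0 < volume {v : Fin d → ℝ | 0 < volume (slant v '' A ∩ slant v '' B)} := by
  obtain ⟨K, μ, M, hKA, hK, hμ, hμK, hM, hMμ, hμ0⟩ := exists_compact_measure_of_lt_dimH hA hdA
  obtain ⟨L, ν, M', hLB, hL, hν, hνL, hM', hMν, hν0⟩ := exists_compact_measure_of_lt_dimH hB hdB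
  refine (volume_slant_image_inter_pos hd hK hL hμK hνL hM hM' hMμ hMν hμ0 hν0).trans_le
    (measure_mono fun v hv => lt_of_lt_of_le hv (measure_mono ?_))
  exact inter_subset_inter (image_mono hKA) (image_mono hLB)

theorem measurableSet_ofLp_image {n : ℕ} {A : Set (EuclideanSpace ℝ (Fin n))}
    (hA : MeasurableSet A) : MeasurableSet (WithLp.ofLp '' A) :=
  (MeasurableEquiv.toLp 2 (Fin n → ℝ)).symm.measurableEmbedding.measurableSet_image.2 hA

theorem dimH_ofLp_image {n : ℕ} (A : Set (EuclideanSpace ℝ (Fin n))) :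
    dimH (WithLp.ofLp '' A) = dimH A :=
  (EuclideanSpace.equiv (Fin n) ℝ).dimH_image A

theorem stmt_1 (n : ℕ) (hn : 2 ≤ n)
    (A B : Set (EuclideanSpace ℝ (Fin n)))
    (hA : MeasurableSet A) (hB : MeasurableSet B)
    (hdA : (n : ℝ≥0∞) - 1 < dimH A) (hdB : (n : ℝ≥0∞) - 1 < dimH B) :
    0 < μH[(n : ℝ) - 1]
      {e : EuclideanSpace ℝ (Fin n) | ‖e‖ = 1 ∧
        0 < μH[(n : ℝ) - 1]
          ((fun x => x - ⟪x, e⟫ • e) '' A ∩ (fun x => x - ⟪x, e⟫ • e) '' B)} := by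
  obtain ⟨d, rfl⟩ : ∃ d, n = d + 1 := ⟨n - 1, by omega⟩
  have hd : d ≠ 0 := by omega
  have hreal : ((d + 1 : ℕ) : ℝ) - 1 = d := by simp
  have hennreal : ((d + 1 : ℕ) : ℝ≥0∞) - 1 = d := by
    rw [Nat.cast_add, Nat.cast_one, ENNReal.add_sub_cancel_right ENNReal.one_ne_top]
  rw [hennreal] at hdA hdB
  rw [hreal]
  refine hausdorffMeasure_pos_of_volume_lineChart_image_pos (fun e he => he.1)
    ((volume_slant_image_inter_pos_of_lt_dimH hd (measurableSet_ofLp_image hA)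
      (measurableSet_ofLp_image hB) (by rwa [dimH_ofLp_image]) (by rwa [dimH_ofLp_image])).trans_le
      (measure_mono fun v hv => ?_))
  exact ⟨unitDirection v, ⟨⟨norm_unitDirection v, hausdorffMeasure_proj_inter_pos hv⟩,
    unitDirection_zero_pos v⟩, lineChart_unitDirection v⟩
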